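/- arXiv:1508.01721 — 2 statements merged into one kernel-verified Lean document; each statement's English description precedes it below -/
import Mathlib

section
/- For every n ≥ 2, the center of the affine braid group B(Ã_{n−1}) is trivial. -/
/-- The braid relation word `s_i s_j s_i (s_j s_i s_j)⁻¹` in a free group. -/
def braidRelWord {I : Type*} (i j : I) : FreeGroup I :=
  FreeGroup.of i * FreeGroup.of j * FreeGroup.of i *
    (FreeGroup.of j * FreeGroup.of i * FreeGroup.of j)⁻¹

/-- The commutation relation word `s_i s_j (s_j s_i)⁻¹` in a free group. -/
def commRelWord {I : Type*} (i j : I) : FreeGroup I :=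
  FreeGroup.of i * FreeGroup.of j * (FreeGroup.of j * FreeGroup.of i)⁻¹

/-- The defining relations of the affine braid group `B(Ã_{n-1})`: for `n ≥ 3` the braid
relations `s_i s_{i+1} s_i = s_{i+1} s_i s_{i+1}` (`i ∈ ℤ/n`) and the commutation relations
`s_i s_j = s_j s_i` for `i - j ≠ ±1`; for `n = 2` there are no relations, so that
`B(Ã_1)` is the free group on two generators. -/
def affineBraidRels (n : ℕ) : Set (FreeGroup (ZMod n)) :=
  if n ≤ 2 then ∅
  else {r | (∃ i : ZMod n, r = braidRelWord i (i + 1)) ∨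
            (∃ i j : ZMod n, i - j ≠ 1 ∧ i - j ≠ -1 ∧ r = commRelWord i j)}

/-- The affine braid group `B(Ã_{n-1})`. -/
abbrev AffineBraidGroup (n : ℕ) := PresentedGroup (affineBraidRels n)

/-- The generator `s_i` of the affine braid group `B(Ã_{n-1})`, `i ∈ ℤ/n`. -/
def affineBraidGen (n : ℕ) (i : ZMod n) : AffineBraidGroup n := PresentedGroup.of i

namespace FreeGroup

variable {α : Type*}

theorem eq_one_of_forall_commute [Nontrivial α] {z : FreeGroup α}
    (hz : ∀ y : FreeGroup α, Commute z y) : z = 1 := by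
  classical
  by_contra hne
  have hw : z.toWord ≠ [] := fun h => hne (toWord_eq_nil_iff.1 h)
  obtain ⟨y, hy⟩ := exists_ne (z.toWord.head hw).1
  set ℓ : α × Bool := (y, (z.toWord.getLast hw).2) with hℓ
  have hleft : IsReduced ([ℓ] ++ z.toWord) := by
    obtain ⟨a, L, hL⟩ := List.exists_cons_of_ne_nil hw
    have hred := isReduced_toWord (x := z)
    simp only [hL, List.head_cons, List.singleton_append, isReduced_cons_cons] at hy hred ⊢
    exact ⟨fun h => absurd h hy, hred⟩
  have hright : IsReduced (z.toWord ++ [ℓ]) := by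
    refine List.IsChain.append isReduced_toWord (List.isChain_singleton _) ?_
    intro a ha b hb _
    rw [List.getLast?_eq_getLast_of_ne_nil hw] at ha
    simp only [Option.mem_def, Option.some.injEq, List.head?_cons] at ha hb
    rw [← ha, ← hb]
  have hcomm : mk (z.toWord ++ [ℓ]) = mk ([ℓ] ++ z.toWord) := by
    rw [← mul_mk, ← mul_mk, mk_toWord]
    exact hz _
  have hwords := reduce.sound hcomm
  rw [hleft.reduce_eq, hright.reduce_eq] at hwords
  have hhead := congrArg List.head? hwords
  rw [List.head?_append_of_ne_nil _ hw, List.head?_eq_some_head hw] at hhead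
  simp only [List.singleton_append, List.head?_cons, Option.some.injEq] at hhead
  exact hy (by rw [hhead])

theorem exists_zpow_eq_of_commute {g : FreeGroup α} (hg : g ≠ 1) :
    ∃ c : FreeGroup α, ∀ h, Commute g h → ∃ k : ℤ, c ^ k = h := by
  let C : Subgroup (FreeGroup α) := Subgroup.centralizer {g}
  have hgC : g ∈ C := Subgroup.mem_centralizer_singleton_iff.2 rfl
  let e := IsFreeGroup.toFreeGroup C
  have hsub : Subsingleton (IsFreeGroup.Generators C) := by
    by_contra hns
    rw [not_subsingleton_iff_nontrivial] at hns
    have h1 : e ⟨g, hgC⟩ = 1 := eq_one_of_forall_commute fun y => by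
      obtain ⟨⟨h, hh⟩, rfl⟩ := e.surjective y
      refine Commute.map (Subtype.ext ?_) e
      exact (Subgroup.mem_centralizer_singleton_iff.1 hh).symm
    rw [map_eq_one_iff e e.injective] at h1
    exact hg (congrArg Subtype.val h1)
  have hcyc : ∃ c : FreeGroup (IsFreeGroup.Generators C), ∀ y, ∃ k : ℤ, c ^ k = y := by
    rcases isEmpty_or_nonempty (IsFreeGroup.Generators C) with hE | ⟨⟨a⟩⟩
    · exact ⟨1, fun y => ⟨0, Subsingleton.elim _ _⟩⟩
    · refine ⟨of a, fun y => ?_⟩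
      induction y using FreeGroup.induction_on with
      | C1 => exact ⟨0, rfl⟩
      | of b => exact ⟨1, by rw [Subsingleton.elim b a, zpow_one]⟩
      | inv_of b _ => exact ⟨-1, by rw [Subsingleton.elim b a, zpow_neg_one]⟩
      | mul u v hu hv =>
        obtain ⟨k, rfl⟩ := hu
        obtain ⟨l, rfl⟩ := hv
        exact ⟨k + l, zpow_add _ _ _⟩
  obtain ⟨c, hc⟩ := hcyc
  refine ⟨(e.symm c : C), fun h hh => ?_⟩
  have hhC : h ∈ C := Subgroup.mem_centralizer_singleton_iff.2 hh.eq.symm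
  obtain ⟨k, hk⟩ := hc (e ⟨h, hhC⟩)
  refine ⟨k, ?_⟩
  have := congrArg (fun y => ((e.symm y : C) : FreeGroup α)) hk
  simpa using this

theorem commute_of_commute {g h k : FreeGroup α} (hg : g ≠ 1) (hh : Commute g h)
    (hk : Commute g k) : Commute h k := by
  obtain ⟨c, hc⟩ := exists_zpow_eq_of_commute hg
  obtain ⟨a, rfl⟩ := hc h hh
  obtain ⟨b, rfl⟩ := hc k hk
  exact Commute.zpow_zpow_self c a b

theorem map_eq_one_of_commute {H : Type*} [Group H] [IsMulTorsionFree H] (f : FreeGroup α →* H)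
    {g h : FreeGroup α} (hg : g ≠ 1) (hfg : f g = 1) (hh : Commute g h) : f h = 1 := by
  obtain ⟨c, hc⟩ := exists_zpow_eq_of_commute hg
  obtain ⟨a, rfl⟩ := hc g (Commute.refl g)
  obtain ⟨b, rfl⟩ := hc h hh
  have ha : a ≠ 0 := by
    rintro rfl
    exact hg (zpow_zero c)
  rw [map_zpow] at hfg ⊢
  rw [(IsMulTorsionFree.zpow_eq_one_iff_left ha).1 hfg, one_zpow]

theorem not_commute_of_mul_inv {i j : α} (hij : i ≠ j) :
    ¬ Commute (of i * (of j)⁻¹) ((of j)⁻¹ * of i) := by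
  classical
  intro h
  have h' := congrArg (lift fun a => if a = i then (Equiv.swap 0 1 : Equiv.Perm (Fin 3))
    else finRotate 3) h.eq
  simp only [_root_.map_mul, _root_.map_inv, lift_apply_of, if_true, if_neg hij.symm] at h'
  revert h'
  decide

end FreeGroup

section BraidSequences

variable {G : Type*} [Group G]

/-- The product `σ 0 * σ 1 * ⋯ * σ (k - 1)`. -/
def prodSeq (σ : ℕ → G) : ℕ → G
  | 0 => 1
  | k + 1 => prodSeq σ k * σ k

/-- The conjugate of `a` by `(σ 0 * ⋯ * σ (k - 1))⁻¹`. -/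
def conjSeq (σ : ℕ → G) (a : G) (k : ℕ) : G := (prodSeq σ k)⁻¹ * a * prodSeq σ k

/-- The elements `σ 0, …, σ (m - 1)` satisfy the relations of the braid group on `m + 1` strands. -/
structure IsBraidSeq (σ : ℕ → G) (m : ℕ) : Prop where
  braid : ∀ i, i + 1 < m → σ i * σ (i + 1) * σ i = σ (i + 1) * σ i * σ (i + 1)
  comm : ∀ i j, i + 1 < j → j < m → Commute (σ i) (σ j)

/-- The subgroup generated by `σ 0, …, σ (m - 1)`. -/
def braidSubgroup (σ : ℕ → G) (m : ℕ) : Subgroup G := Subgroup.closure {g | ∃ i < m, σ i = g}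

/-- The subgroup generated by the conjugates `conjSeq σ a k` with `k ≤ m`. -/
def conjSubgroup (σ : ℕ → G) (a : G) (m : ℕ) : Subgroup G :=
  Subgroup.closure {g | ∃ k ≤ m, conjSeq σ a k = g}

theorem mem_braidSubgroup {σ : ℕ → G} {m i : ℕ} (hi : i < m) : σ i ∈ braidSubgroup σ m :=
  Subgroup.subset_closure ⟨i, hi, rfl⟩

theorem conjSeq_mem_conjSubgroup {σ : ℕ → G} {a : G} {m k : ℕ} (hk : k ≤ m) :
    conjSeq σ a k ∈ conjSubgroup σ a m :=
  Subgroup.subset_closure ⟨k, hk, rfl⟩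

theorem prodSeq_mem_braidSubgroup {σ : ℕ → G} {m k : ℕ} (hk : k ≤ m) :
    prodSeq σ k ∈ braidSubgroup σ m := by
  induction k with
  | zero => exact one_mem _
  | succ k ih => exact mul_mem (ih (by omega)) (mem_braidSubgroup (by omega))

theorem prodSeq_succ_eq (σ : ℕ → G) (k : ℕ) :
    prodSeq σ (k + 1) = σ 0 * prodSeq (fun i => σ (i + 1)) k := by
  induction k with
  | zero => simp [prodSeq]
  | succ k ih => rw [prodSeq, ih, prodSeq, mul_assoc]

theorem map_prodSeq {H : Type*} [Group H] (f : G →* H) (σ : ℕ → G) (k : ℕ) :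
    f (prodSeq σ k) = prodSeq (fun i => f (σ i)) k := by
  induction k with
  | zero => exact map_one f
  | succ k ih => rw [prodSeq, map_mul, ih, prodSeq]

theorem Commute.prodSeq_right {σ : ℕ → G} {g : G} {k : ℕ} (h : ∀ i < k, Commute g (σ i)) :
    Commute g (prodSeq σ k) := by
  induction k with
  | zero => exact Commute.one_right g
  | succ k ih => exact (ih fun i hi => h i (by omega)).mul_right (h k (by omega))

theorem conjSeq_succ (σ : ℕ → G) (a : G) (k : ℕ) :
    conjSeq σ a (k + 1) = (σ k)⁻¹ * conjSeq σ a k * σ k := by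
  simp only [conjSeq, prodSeq]
  group

theorem conjSeq_zpow (σ : ℕ → G) (a : G) (p : ℤ) (k : ℕ) :
    conjSeq σ (a ^ p) k = conjSeq σ a k ^ p := by
  have h := conj_zpow (i := p) (a := (prodSeq σ k)⁻¹) (b := a)
  rw [inv_inv] at h
  exact h.symm

namespace IsBraidSeq

variable {σ : ℕ → G} {m : ℕ}

theorem shift (h : IsBraidSeq σ (m + 1)) : IsBraidSeq (fun i => σ (i + 1)) m where
  braid i hi := h.braid (i + 1) (by omega)
  comm i j hij hj := h.comm (i + 1) (j + 1) (by omega) (by omega)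

theorem commute_prodSeq (h : IsBraidSeq σ m) {i k : ℕ} (hk : k < i) (hi : i < m) :
    Commute (σ i) (prodSeq σ k) :=
  Commute.prodSeq_right fun j hj => (h.comm j i (by omega) hi).symm

theorem prodSeq_mul (h : IsBraidSeq σ m) {i k : ℕ} (hik : i + 1 < k) (hk : k ≤ m) :
    prodSeq σ k * σ i = σ (i + 1) * prodSeq σ k := by
  induction k, hik using Nat.le_induction with
  | base =>
    simp only [prodSeq]
    rw [mul_assoc, mul_assoc, ← mul_assoc (σ i), h.braid i (by omega),
      ← mul_assoc (σ (i + 1)), ← mul_assoc (σ (i + 1)), (h.commute_prodSeq (by omega)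
        (by omega : i + 1 < m)).eq]
    group
  | succ k hik ih =>
    rw [prodSeq, mul_assoc, ← (h.comm i k (by omega) (by omega)).eq, ← mul_assoc,
      ih (by omega), mul_assoc]

theorem conjSeq_shift (h : IsBraidSeq σ m) {k : ℕ} (hk : k < m) :
    conjSeq (fun i => σ (i + 1)) (σ 0) k = prodSeq σ k * σ k * (prodSeq σ k)⁻¹ := by
  induction k with
  | zero => simp [conjSeq, prodSeq]
  | succ k ih =>
    have hc := h.commute_prodSeq (lt_add_one k) hk
    have hb : (σ (k + 1))⁻¹ * σ k * σ (k + 1) = σ k * σ (k + 1) * (σ k)⁻¹ := by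
      rw [eq_mul_inv_iff_mul_eq, mul_assoc, mul_assoc, inv_mul_eq_iff_eq_mul, ← mul_assoc,
        ← mul_assoc, h.braid k hk]
    rw [conjSeq_succ, ih (by omega), prodSeq]
    calc (σ (k + 1))⁻¹ * (prodSeq σ k * σ k * (prodSeq σ k)⁻¹) * σ (k + 1)
        = (σ (k + 1))⁻¹ * prodSeq σ k * σ k * ((prodSeq σ k)⁻¹ * σ (k + 1)) := by group
      _ = prodSeq σ k * ((σ (k + 1))⁻¹ * σ k * σ (k + 1)) * (prodSeq σ k)⁻¹ := by
        rw [hc.inv_left.eq, ← hc.inv_right.eq]; group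
      _ = _ := by rw [hb]; group

end IsBraidSeq

theorem commute_mul_of_braid {s t p q r : G} (hst : s * t * s = t * s * t)
    (hq : q = s⁻¹ * p * s) (hr : r = t⁻¹ * q * t) (htp : Commute t p) (hsr : Commute s r)
    (hs : Commute s (p * q)) : Commute t (q * r) := by
  have ht : t = (t * s)⁻¹ * s * (t * s) := by
    rw [mul_assoc, eq_inv_mul_iff_mul_eq, ← mul_assoc, hst]
  have hqr : q * r = (t * s)⁻¹ * (p * q) * (t * s) := by
    have h1 : (t * s)⁻¹ * p * (t * s) = q := by
      rw [hq, mul_inv_rev]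
      calc s⁻¹ * t⁻¹ * p * (t * s) = s⁻¹ * (t⁻¹ * (p * t)) * s := by group
        _ = s⁻¹ * p * s := by rw [← htp.eq]; group
    have h2 : (t * s)⁻¹ * q * (t * s) = r := by
      calc (t * s)⁻¹ * q * (t * s) = s⁻¹ * ((t⁻¹ * q * t) * s) := by group
        _ = r := by rw [← hr, ← hsr.eq]; group
    nth_rewrite 1 [← h1]
    rw [← h2]
    group
  have hc : ∀ g a b : G, Commute a b → Commute (g⁻¹ * a * g) (g⁻¹ * b * g) := by
    intro g a b hab
    have := hab.map (MulAut.conj g⁻¹)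
    simpa using this
  rw [ht, hqr]
  exact hc _ _ _ hs

/-- The relations of the Artin group of type `B`, up to replacing each `σ i` by its inverse. -/
structure IsTypeBSeq (σ : ℕ → G) (a : G) (m : ℕ) : Prop extends IsBraidSeq σ m where
  comm_base : ∀ i, 1 ≤ i → i < m → Commute a (σ i)
  comm_conj : 0 < m → Commute (σ 0) (a * ((σ 0)⁻¹ * a * σ 0))

namespace IsTypeBSeq

variable {σ : ℕ → G} {a : G} {m : ℕ}

theorem commute_conjSeq_of_lt (h : IsTypeBSeq σ a m) {i j : ℕ} (hji : j < i) (hi : i < m) :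
    Commute (σ i) (conjSeq σ a j) := by
  have hp := h.commute_prodSeq hji hi
  exact (hp.inv_right.mul_right (h.comm_base i (by omega) hi).symm).mul_right hp

theorem commute_conjSeq_of_gt (h : IsTypeBSeq σ a m) {i j : ℕ} (hij : i + 1 < j) (hj : j ≤ m) :
    Commute (σ i) (conjSeq σ a j) := by
  have hp := h.prodSeq_mul hij hj
  have hp' : σ i * (prodSeq σ j)⁻¹ = (prodSeq σ j)⁻¹ * σ (i + 1) := by
    rw [mul_inv_eq_iff_eq_mul, mul_assoc, eq_inv_mul_iff_mul_eq, hp]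
  rw [commute_iff_eq, conjSeq, mul_assoc _ _ (σ i), hp, ← mul_assoc, ← mul_assoc, hp',
    mul_assoc _ (σ (i + 1)), ← (h.comm_base (i + 1) (by omega) (by omega)).eq]
  group

theorem commute_conjSeq_mul (h : IsTypeBSeq σ a m) {i : ℕ} (hi : i < m) :
    Commute (σ i) (conjSeq σ a i * conjSeq σ a (i + 1)) := by
  induction i with
  | zero => simpa [conjSeq, prodSeq] using h.comm_conj hi
  | succ i ih =>
    exact commute_mul_of_braid (h.braid i hi) (conjSeq_succ σ a i) (conjSeq_succ σ a (i + 1))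
      (h.commute_conjSeq_of_lt (lt_add_one i) hi) (h.commute_conjSeq_of_gt (by omega) hi)
      (ih (by omega))

theorem conj_mem (h : IsTypeBSeq σ a m) {i k : ℕ} (hi : i < m) (hk : k ≤ m) :
    σ i * conjSeq σ a k * (σ i)⁻¹ ∈ conjSubgroup σ a m ∧
      (σ i)⁻¹ * conjSeq σ a k * σ i ∈ conjSubgroup σ a m := by
  have hfix : Commute (σ i) (conjSeq σ a k) →
      σ i * conjSeq σ a k * (σ i)⁻¹ ∈ conjSubgroup σ a m ∧
      (σ i)⁻¹ * conjSeq σ a k * σ i ∈ conjSubgroup σ a m := by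
    intro hc
    rw [mul_assoc (σ i)⁻¹, ← hc.eq, inv_mul_cancel_left, hc.eq, mul_inv_cancel_right]
    exact ⟨conjSeq_mem_conjSubgroup hk, conjSeq_mem_conjSubgroup hk⟩
  have hA := conjSeq_mem_conjSubgroup (σ := σ) (a := a) hi.le
  have hA' := conjSeq_mem_conjSubgroup (σ := σ) (a := a) (Nat.succ_le_of_lt hi)
  have hmul := h.commute_conjSeq_mul hi
  have hsucc := conjSeq_succ σ a i
  rcases lt_trichotomy k i with hki | rfl | hki
  · exact hfix (h.commute_conjSeq_of_lt hki hi)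
  · rw [← hsucc]
    refine ⟨?_, hA'⟩
    have : σ k * conjSeq σ a k * (σ k)⁻¹ =
        conjSeq σ a k * conjSeq σ a (k + 1) * (conjSeq σ a k)⁻¹ := by
      calc σ k * conjSeq σ a k * (σ k)⁻¹
          = σ k * (conjSeq σ a k * conjSeq σ a (k + 1)) *
            ((conjSeq σ a (k + 1))⁻¹ * (σ k)⁻¹) := by group
        _ = _ := by rw [hmul.eq, hsucc]; group
    rw [this]
    exact mul_mem (mul_mem hA hA') (inv_mem hA)
  · rcases Nat.eq_or_lt_of_le hki with rfl | hlt
    · constructor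
      · have : σ i * conjSeq σ a (i + 1) * (σ i)⁻¹ = conjSeq σ a i := by rw [hsucc]; group
        exact this ▸ hA
      · have : (σ i)⁻¹ * conjSeq σ a (i + 1) * σ i =
            (conjSeq σ a (i + 1))⁻¹ * conjSeq σ a i * conjSeq σ a (i + 1) := by
          calc (σ i)⁻¹ * conjSeq σ a (i + 1) * σ i
              = ((σ i)⁻¹ * (conjSeq σ a i)⁻¹) *
                (conjSeq σ a i * conjSeq σ a (i + 1) * σ i) := by group
            _ = ((σ i)⁻¹ * conjSeq σ a i * σ i)⁻¹ *
                (conjSeq σ a i * conjSeq σ a (i + 1)) := by rw [← hmul.eq]; group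
            _ = _ := by rw [← hsucc]; group
        exact this ▸ mul_mem (mul_mem (inv_mem hA') hA) hA'
    · exact hfix (h.commute_conjSeq_of_gt hlt hk)

theorem braidSubgroup_le_normalizer (h : IsTypeBSeq σ a m) :
    braidSubgroup σ m ≤ Subgroup.normalizer (conjSubgroup σ a m : Set G) := by
  refine (Subgroup.closure_le _).2 ?_
  rintro _ ⟨i, hi, rfl⟩
  have key : ∀ g : G, (∀ k ≤ m, g * conjSeq σ a k * g⁻¹ ∈ conjSubgroup σ a m) →
      ∀ u ∈ conjSubgroup σ a m, g * u * g⁻¹ ∈ conjSubgroup σ a m := by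
    intro g hg
    have : conjSubgroup σ a m ≤ (conjSubgroup σ a m).comap (MulAut.conj g).toMonoidHom := by
      refine (Subgroup.closure_le _).2 ?_
      rintro _ ⟨k, hk, rfl⟩
      exact hg k hk
    exact fun u hu => this hu
  refine Subgroup.mem_normalizer_iff.2 fun u => ⟨fun hu => ?_, fun hu => ?_⟩
  · exact key _ (fun k hk => (h.conj_mem hi hk).1) u hu
  · have := key (σ i)⁻¹ (fun k hk => by simpa using (h.conj_mem hi hk).2) _ hu
    simpa [mul_assoc] using this

theorem exists_mul_of_mem_sup (h : IsTypeBSeq σ a m) {g : G}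
    (hg : g ∈ conjSubgroup σ a m ⊔ braidSubgroup σ m) :
    ∃ u ∈ conjSubgroup σ a m, ∃ b ∈ braidSubgroup σ m, u * b = g := by
  rw [← SetLike.mem_coe, Subgroup.coe_mul_of_right_le_normalizer_left _ _
    h.braidSubgroup_le_normalizer] at hg
  exact Set.mem_mul.1 hg

end IsTypeBSeq

end BraidSequences

section ArtinAction

variable {α : Type*} [DecidableEq α]

/-- The Artin endomorphism of a free group: `p ↦ p q p⁻¹`, `q ↦ p`, fixing the other generators. -/
def artinHom (p q : α) : FreeGroup α →* FreeGroup α :=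
  FreeGroup.lift fun a =>
    if a = p then FreeGroup.of p * FreeGroup.of q * (FreeGroup.of p)⁻¹
    else if a = q then FreeGroup.of p else FreeGroup.of a

@[simp]
theorem artinHom_left (p q : α) :
    artinHom p q (FreeGroup.of p) = FreeGroup.of p * FreeGroup.of q * (FreeGroup.of p)⁻¹ := by
  simp [artinHom]

theorem artinHom_right {p q : α} (h : p ≠ q) :
    artinHom p q (FreeGroup.of q) = FreeGroup.of p := by
  simp [artinHom, h.symm]

theorem artinHom_of_ne {p q a : α} (hp : a ≠ p) (hq : a ≠ q) :
    artinHom p q (FreeGroup.of a) = FreeGroup.of a := by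
  simp [artinHom, hp, hq]

/-- The endomorphism of a free group killing the generator `p`. -/
def killHom (p : α) : FreeGroup α →* FreeGroup α :=
  FreeGroup.lift fun a => if a = p then 1 else FreeGroup.of a

@[simp]
theorem killHom_self (p : α) : killHom p (FreeGroup.of p) = 1 := by simp [killHom]

theorem killHom_of_ne {p a : α} (h : a ≠ p) : killHom p (FreeGroup.of a) = FreeGroup.of a := by
  simp [killHom, h]

theorem eq_of_isConj_of {p q : α} (h : IsConj (FreeGroup.of p) (FreeGroup.of q)) : p = q := by
  by_contra hne
  have h' := MonoidHom.map_isConj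
    (FreeGroup.lift fun a => if a = p then Multiplicative.ofAdd (1 : ℤ) else 1) h
  rw [isConj_iff_eq] at h'
  simp [Ne.symm hne] at h'

variable {G : Type*} [Group G] [MulDistribMulAction G (FreeGroup α)]

/-- The elements `σ 0, …, σ (m - 1)` act on a free group by the Artin automorphisms attached to
consecutive generators among `e 0, …, e m`. The function `d` is a left inverse of `e` there. -/
structure IsArtinSeq (σ : ℕ → G) (e : ℕ → α) (d : α → ℕ) (m : ℕ) : Prop
    extends IsBraidSeq σ m where
  leftInv : ∀ i ≤ m, d (e i) = i
  smul_eq : ∀ i < m, ∀ y : FreeGroup α, σ i • y = artinHom (e i) (e (i + 1)) y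

namespace IsArtinSeq

variable {σ : ℕ → G} {e : ℕ → α} {d : α → ℕ} {m : ℕ}

theorem ne (h : IsArtinSeq σ e d m) {i j : ℕ} (hi : i ≤ m) (hj : j ≤ m) (hij : i ≠ j) :
    e i ≠ e j := fun he => hij (by rw [← h.leftInv i hi, he, h.leftInv j hj])

theorem shift (h : IsArtinSeq σ e d (m + 1)) :
    IsArtinSeq (fun i => σ (i + 1)) (fun i => e (i + 1)) (fun a => d a - 1) m where
  toIsBraidSeq := h.toIsBraidSeq.shift
  leftInv i hi := by simp [h.leftInv (i + 1) (by omega)]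
  smul_eq i hi := h.smul_eq (i + 1) (by omega)

theorem smul_left (h : IsArtinSeq σ e d m) {i : ℕ} (hi : i < m) :
    σ i • FreeGroup.of (e i) =
      FreeGroup.of (e i) * FreeGroup.of (e (i + 1)) * (FreeGroup.of (e i))⁻¹ := by
  rw [h.smul_eq i hi, artinHom_left]

theorem smul_right (h : IsArtinSeq σ e d m) {i : ℕ} (hi : i < m) :
    σ i • FreeGroup.of (e (i + 1)) = FreeGroup.of (e i) := by
  rw [h.smul_eq i hi, artinHom_right (h.ne (by omega) (by omega) (by omega))]

theorem smul_of_ne (h : IsArtinSeq σ e d m) {i : ℕ} (hi : i < m) {a : α} (ha : a ≠ e i)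
    (ha' : a ≠ e (i + 1)) : σ i • FreeGroup.of a = FreeGroup.of a := by
  rw [h.smul_eq i hi, artinHom_of_ne ha ha']

theorem prodSeq_inv_smul (h : IsArtinSeq σ e d m) {k : ℕ} (hk : k ≤ m) :
    (prodSeq σ k)⁻¹ • FreeGroup.of (e 0) = FreeGroup.of (e k) := by
  induction k with
  | zero => simp [prodSeq]
  | succ k ih =>
    rw [prodSeq, mul_inv_rev, mul_smul, ih (by omega), inv_smul_eq_iff, h.smul_right hk]

theorem smul_prodSeq (h : IsArtinSeq σ e d m) {i : ℕ} (hi : i < m) :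
    σ i • prodSeq (fun j => FreeGroup.of (e j)) (m + 1) =
      prodSeq (fun j => FreeGroup.of (e j)) (m + 1) := by
  have hlow : ∀ k ≤ i, σ i • prodSeq (fun j => FreeGroup.of (e j)) k =
      prodSeq (fun j => FreeGroup.of (e j)) k := by
    intro k hk
    induction k with
    | zero => exact smul_one _
    | succ k ih =>
      rw [prodSeq, smul_mul', ih (by omega), h.smul_of_ne hi (h.ne (by omega) (by omega) (by omega))
        (h.ne (by omega) (by omega) (by omega))]
  have hhigh : ∀ k, i + 2 ≤ k → k ≤ m + 1 → σ i • prodSeq (fun j => FreeGroup.of (e j)) k =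
      prodSeq (fun j => FreeGroup.of (e j)) k := by
    intro k hik hk
    induction k, hik using Nat.le_induction with
    | base =>
      simp only [prodSeq]
      rw [smul_mul', smul_mul', hlow i le_rfl, h.smul_left hi, h.smul_right hi]
      group
    | succ k hik ih =>
      rw [prodSeq, smul_mul', ih (by omega), h.smul_of_ne hi (h.ne (by omega) (by omega) (by omega))
        (h.ne (by omega) (by omega) (by omega))]
  exact hhigh (m + 1) (by omega) le_rfl

theorem smul_prodSeq_of_mem (h : IsArtinSeq σ e d m) {b : G} (hb : b ∈ braidSubgroup σ m) :
    b • prodSeq (fun j => FreeGroup.of (e j)) (m + 1) =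
      prodSeq (fun j => FreeGroup.of (e j)) (m + 1) := by
  have : braidSubgroup σ m ≤
      MulAction.stabilizer G (prodSeq (fun j => FreeGroup.of (e j)) (m + 1)) := by
    refine (Subgroup.closure_le _).2 ?_
    rintro _ ⟨i, hi, rfl⟩
    exact h.smul_prodSeq hi
  exact this hb

/-! ### Removing the strand `0` -/

theorem isTypeBSeq (h : IsBraidSeq σ (m + 1)) :
    IsTypeBSeq (fun i => σ (i + 1)) (σ 0 ^ (-2 : ℤ)) m where
  toIsBraidSeq := h.shift
  comm_base i hi him := (h.comm 0 (i + 1) (by omega) (by omega)).zpow_left _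
  comm_conj hm := by
    have hb := h.braid 0 (by omega)
    simp only [zero_add] at hb ⊢
    generalize σ 0 = s at hb
    generalize σ 1 = t at hb
    have hts : t⁻¹ * s * t = s * t * s⁻¹ := by
      rw [eq_mul_inv_iff_mul_eq, mul_assoc, mul_assoc, inv_mul_eq_iff_eq_mul, ← mul_assoc,
        ← mul_assoc, hb]
    have hc : Commute t (s * t * t * s) := by
      have h1 : t * (s * t * t * s) = (t * s * t) * t * s := by group
      have h2 : s * t * t * s * t = s * t * (t * s * t) := by group
      rw [commute_iff_eq, h1, h2, ← hb]
      have h3 : s * t * s * t * s = s * t * (s * t * s) := by group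
      rw [h3]
    have he : s ^ (-2 : ℤ) * (t⁻¹ * s ^ (-2 : ℤ) * t) = (s * t * t * s)⁻¹ := by
      have h1 : t⁻¹ * s ^ (-2 : ℤ) * t = (s * t * s⁻¹) ^ (-2 : ℤ) := by
        rw [← hts]
        have := conj_zpow (i := (-2 : ℤ)) (a := t⁻¹) (b := s)
        rw [inv_inv] at this
        exact this.symm
      rw [h1, conj_zpow]
      group
    rw [he]
    exact hc.inv_right

/-- Coset decomposition with respect to the stabilizer of the strand `0`. -/
theorem exists_mul_prodSeq_inv_mem (h : IsBraidSeq σ (m + 1)) {g : G}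
    (hg : g ∈ braidSubgroup σ (m + 1)) :
    ∃ k ≤ m + 1, g * (prodSeq σ k)⁻¹ ∈
      conjSubgroup (fun i => σ (i + 1)) (σ 0 ^ (-2 : ℤ)) m ⊔
        braidSubgroup (fun i => σ (i + 1)) m := by
  set N := conjSubgroup (fun i => σ (i + 1)) (σ 0 ^ (-2 : ℤ)) m
  set B := braidSubgroup (fun i => σ (i + 1)) m
  have hB : ∀ i, 1 ≤ i → i ≤ m → σ i ∈ N ⊔ B := by
    intro i h1 him
    obtain ⟨j, rfl⟩ := Nat.exists_eq_add_of_le' h1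
    exact Subgroup.mem_sup_right (mem_braidSubgroup (σ := fun i => σ (i + 1)) (by omega))
  have hN : ∀ k ≤ m, prodSeq σ k * σ k ^ (-2 : ℤ) * (prodSeq σ k)⁻¹ ∈ N ⊔ B := by
    intro k hk
    rw [← conj_zpow, ← h.conjSeq_shift (by omega), ← conjSeq_zpow]
    exact Subgroup.mem_sup_left (conjSeq_mem_conjSubgroup hk)
  have hstep : ∀ i < m + 1, ∀ k ≤ m + 1,
      (∃ l ≤ m + 1, prodSeq σ k * σ i * (prodSeq σ l)⁻¹ ∈ N ⊔ B) ∧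
      (∃ l ≤ m + 1, prodSeq σ k * (σ i)⁻¹ * (prodSeq σ l)⁻¹ ∈ N ⊔ B) := by
    intro i hi k hk
    rcases lt_trichotomy k i with hki | rfl | hki
    · have hc := h.commute_prodSeq hki hi
      refine ⟨⟨k, hk, ?_⟩, ⟨k, hk, ?_⟩⟩
      · rw [← hc.eq, mul_inv_cancel_right]
        exact hB i (by omega) (by omega)
      · rw [← hc.inv_left.eq, mul_inv_cancel_right]
        exact inv_mem (hB i (by omega) (by omega))
    · refine ⟨⟨k + 1, by omega, ?_⟩, ⟨k + 1, by omega, ?_⟩⟩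
      · rw [prodSeq, mul_inv_cancel]
        exact one_mem _
      · convert hN k (by omega) using 1
        rw [prodSeq]
        group
    · obtain ⟨k, rfl⟩ := Nat.exists_eq_add_of_le' (show 1 ≤ k by omega)
      rcases Nat.eq_or_lt_of_le (Nat.lt_succ_iff.1 hki) with rfl | hlt
      · refine ⟨⟨i, by omega, ?_⟩, ⟨i, by omega, ?_⟩⟩
        · convert inv_mem (hN i (by omega)) using 1
          simp [prodSeq, zpow_neg, zpow_ofNat, pow_two, mul_assoc]
        · rw [prodSeq, mul_inv_cancel_right, mul_inv_cancel]
          exact one_mem _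
      · have hp := h.prodSeq_mul (show i + 1 < k + 1 by omega) hk
        have hp' : prodSeq σ (k + 1) * (σ i)⁻¹ = (σ (i + 1))⁻¹ * prodSeq σ (k + 1) := by
          rw [mul_inv_eq_iff_eq_mul, mul_assoc, hp, inv_mul_cancel_left]
        refine ⟨⟨k + 1, hk, ?_⟩, ⟨k + 1, hk, ?_⟩⟩
        · rw [hp, mul_inv_cancel_right]
          exact hB _ (by omega) (by omega)
        · rw [hp', mul_inv_cancel_right]
          exact inv_mem (hB _ (by omega) (by omega))
  have hmul : ∀ x y : G, (∃ k ≤ m + 1, x * (prodSeq σ k)⁻¹ ∈ N ⊔ B) →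
      (∀ k ≤ m + 1, ∃ l ≤ m + 1, prodSeq σ k * y * (prodSeq σ l)⁻¹ ∈ N ⊔ B) →
      ∃ k ≤ m + 1, x * y * (prodSeq σ k)⁻¹ ∈ N ⊔ B := by
    rintro x y ⟨k, hk, hx⟩ hy
    obtain ⟨l, hl, hy⟩ := hy k hk
    refine ⟨l, hl, ?_⟩
    convert mul_mem hx hy using 1
    group
  induction hg using Subgroup.closure_induction_right with
  | one => exact ⟨0, by omega, by simp [prodSeq]⟩
  | mul_right x _ y hy ih =>
    obtain ⟨i, hi, rfl⟩ := hy
    exact hmul x _ ih fun k hk => (hstep i hi k hk).1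
  | mul_inv_cancel x _ y hy ih =>
    obtain ⟨i, hi, rfl⟩ := hy
    exact hmul x _ ih fun k hk => (hstep i hi k hk).2

theorem smul_zero_of_mem (h : IsArtinSeq σ e d (m + 1)) {b : G}
    (hb : b ∈ braidSubgroup (fun i => σ (i + 1)) m) :
    b • FreeGroup.of (e 0) = FreeGroup.of (e 0) := by
  have : braidSubgroup (fun i => σ (i + 1)) m ≤
      MulAction.stabilizer G (FreeGroup.of (e 0)) := by
    refine (Subgroup.closure_le _).2 ?_
    rintro _ ⟨i, hi, rfl⟩
    exact h.smul_of_ne (by omega) (h.ne (by omega) (by omega) (by omega))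
      (h.ne (by omega) (by omega) (by omega))
  exact this hb

theorem killHom_smul_of_mem (h : IsArtinSeq σ e d (m + 1)) {b : G}
    (hb : b ∈ braidSubgroup (fun i => σ (i + 1)) m) (y : FreeGroup α) :
    killHom (e 0) (b • y) = b • killHom (e 0) y := by
  induction hb using Subgroup.closure_induction generalizing y with
  | mem _ hx =>
    obtain ⟨i, hi, rfl⟩ := hx
    simp only [h.smul_eq (i + 1) (by omega)]
    have h1 : e (i + 1) ≠ e 0 := h.ne (by omega) (by omega) (by omega)
    have h2 : e (i + 1 + 1) ≠ e 0 := h.ne (by omega) (by omega) (by omega)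
    have h3 : e (i + 1) ≠ e (i + 1 + 1) := h.ne (by omega) (by omega) (by omega)
    suffices hs : (killHom (e 0)).comp (artinHom (e (i + 1)) (e (i + 1 + 1))) =
        (artinHom (e (i + 1)) (e (i + 1 + 1))).comp (killHom (e 0)) from DFunLike.congr_fun hs y
    ext a
    simp only [MonoidHom.comp_apply]
    by_cases ha0 : a = e 0
    · subst ha0
      simp [artinHom_of_ne h1.symm h2.symm]
    by_cases ha1 : a = e (i + 1)
    · subst ha1
      simp [killHom_of_ne h1, killHom_of_ne h2]
    by_cases ha2 : a = e (i + 1 + 1)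
    · subst ha2
      simp [killHom_of_ne h1, killHom_of_ne h2, artinHom_right h3]
    simp [killHom_of_ne ha0, artinHom_of_ne ha1 ha2]
  | one => simp
  | mul x y _ _ hx hy => rw [mul_smul, hx, hy, mul_smul]
  | inv x _ hx => rw [eq_inv_smul_iff, ← hx, smul_inv_smul]

theorem killHom_smul_conjSeq (h : IsArtinSeq σ e d (m + 1)) {k : ℕ} (hk : k ≤ m)
    (y : FreeGroup α) :
    killHom (e 0) (conjSeq (fun i => σ (i + 1)) (σ 0 ^ (-2 : ℤ)) k • y) = killHom (e 0) y := by
  have h01 : e 0 ≠ e 1 := h.ne (by omega) (by omega) (by omega)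
  have hsq : ∀ y : FreeGroup α, killHom (e 0) (σ 0 • σ 0 • y) = killHom (e 0) y := by
    intro y
    simp only [h.smul_eq 0 (by omega), zero_add]
    suffices hs : (killHom (e 0)).comp ((artinHom (e 0) (e 1)).comp (artinHom (e 0) (e 1))) =
        killHom (e 0) from DFunLike.congr_fun hs y
    ext a
    simp only [MonoidHom.comp_apply]
    by_cases ha0 : a = e 0
    · subst ha0
      simp [artinHom_right h01]
    by_cases ha1 : a = e 1
    · subst ha1
      simp [artinHom_right h01]
    rw [artinHom_of_ne ha0 ha1, artinHom_of_ne ha0 ha1]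
  have hbase : ∀ y : FreeGroup α, killHom (e 0) (σ 0 ^ (-2 : ℤ) • y) = killHom (e 0) y := by
    intro y
    rw [← hsq, ← mul_smul, ← mul_smul]
    congr 2
    group
    simp
  have hp := prodSeq_mem_braidSubgroup (σ := fun i => σ (i + 1)) hk
  rw [conjSeq, mul_smul, mul_smul, h.killHom_smul_of_mem (inv_mem hp), hbase,
    h.killHom_smul_of_mem hp, inv_smul_smul]

theorem killHom_smul_of_mem_conjSubgroup (h : IsArtinSeq σ e d (m + 1)) {u : G}
    (hu : u ∈ conjSubgroup (fun i => σ (i + 1)) (σ 0 ^ (-2 : ℤ)) m) (y : FreeGroup α) :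
    killHom (e 0) (u • y) = killHom (e 0) y := by
  induction hu using Subgroup.closure_induction generalizing y with
  | mem _ hx =>
    obtain ⟨k, hk, rfl⟩ := hx
    exact h.killHom_smul_conjSeq hk y
  | one => rw [one_smul]
  | mul x z _ _ hx hz => rw [mul_smul, hx, hz]
  | inv x _ hx => rw [← hx, smul_inv_smul]

theorem conjSeq_inv_smul_zero (h : IsArtinSeq σ e d (m + 1)) {k : ℕ} (hk : k ≤ m) :
    (conjSeq (fun i => σ (i + 1)) (σ 0 ^ (-2 : ℤ)) k)⁻¹ • FreeGroup.of (e 0) =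
      FreeGroup.of (e 0) * FreeGroup.of (e (k + 1)) * FreeGroup.of (e 0) *
        (FreeGroup.of (e 0) * FreeGroup.of (e (k + 1)))⁻¹ := by
  have hp := prodSeq_mem_braidSubgroup (σ := fun i => σ (i + 1)) hk
  have hfix := h.smul_zero_of_mem (inv_mem hp)
  have hmove := h.shift.prodSeq_inv_smul hk
  have hinv : (conjSeq (fun i => σ (i + 1)) (σ 0 ^ (-2 : ℤ)) k)⁻¹ =
      (prodSeq (fun i => σ (i + 1)) k)⁻¹ * (σ 0 * (σ 0 * prodSeq (fun i => σ (i + 1)) k)) := by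
    simp [conjSeq, zpow_neg, zpow_ofNat, pow_two, mul_assoc]
  simp only [zero_add] at hmove
  have hl := h.smul_left (i := 0) (by omega)
  have hr := h.smul_right (i := 0) (by omega)
  simp only [zero_add] at hl hr
  rw [hinv, mul_smul, mul_smul, mul_smul, h.smul_zero_of_mem hp, hl]
  simp only [smul_mul', smul_inv', hl, hr, hfix, hmove]
  group

theorem exists_smul_zero_eq (h : IsArtinSeq σ e d (m + 1)) {u : G}
    (hu : u ∈ conjSubgroup (fun i => σ (i + 1)) (σ 0 ^ (-2 : ℤ)) m) :
    ∃ W : FreeGroup α, u • FreeGroup.of (e 0) = W * FreeGroup.of (e 0) * W⁻¹ ∧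
      (FreeGroup.lift fun a => conjSeq (fun i => σ (i + 1)) (σ 0 ^ (-2 : ℤ)) (d a - 1))
        (killHom (e 0) W) = u⁻¹ := by
  set φ := FreeGroup.lift fun a =>
    conjSeq (fun i => σ (i + 1)) (σ 0 ^ (-2 : ℤ)) (d a - 1)
  have hinv : ∀ x ∈ conjSubgroup (fun i => σ (i + 1)) (σ 0 ^ (-2 : ℤ)) m,
      (∃ W : FreeGroup α, x • FreeGroup.of (e 0) = W * FreeGroup.of (e 0) * W⁻¹ ∧
        φ (killHom (e 0) W) = x⁻¹) →
      ∃ W : FreeGroup α, x⁻¹ • FreeGroup.of (e 0) = W * FreeGroup.of (e 0) * W⁻¹ ∧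
        φ (killHom (e 0) W) = x⁻¹⁻¹ := by
    rintro x hx ⟨W, hW, hφ⟩
    refine ⟨(x⁻¹ • W)⁻¹, ?_, ?_⟩
    · rw [inv_smul_eq_iff]
      simp only [smul_mul', smul_inv', smul_inv_smul, hW]
      group
    · rw [map_inv, h.killHom_smul_of_mem_conjSubgroup (inv_mem hx), map_inv, hφ]
  induction hu using Subgroup.closure_induction with
  | mem x hx =>
    obtain ⟨k, hk, rfl⟩ := hx
    have hmem := conjSeq_mem_conjSubgroup (σ := fun i => σ (i + 1)) (a := σ 0 ^ (-2 : ℤ)) hk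
    have := hinv _ (inv_mem hmem) ⟨FreeGroup.of (e 0) * FreeGroup.of (e (k + 1)),
      h.conjSeq_inv_smul_zero hk, by
        rw [map_mul, killHom_self, killHom_of_ne (h.ne (by omega) (by omega) (by omega)), one_mul,
          FreeGroup.lift_apply_of, h.leftInv (k + 1) (by omega), Nat.add_sub_cancel, inv_inv]⟩
    simpa only [inv_inv] using this
  | one => exact ⟨1, by simp, by simp⟩
  | mul x y hx hy ihx ihy =>
    obtain ⟨V, hV, hφV⟩ := ihx
    obtain ⟨W, hW, hφW⟩ := ihy
    refine ⟨(x • W) * V, ?_, ?_⟩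
    · rw [mul_smul, hW, smul_mul', smul_mul', smul_inv', hV]
      group
    · rw [map_mul, h.killHom_smul_of_mem_conjSubgroup hx, map_mul, hφV, hφW, mul_inv_rev]
  | inv x hx ih => exact hinv x hx ih

/-- **Artin's theorem**: the Artin representation of the braid group is faithful. -/
theorem eq_one_of_forall_smul_eq (h : IsArtinSeq σ e d m) {g : G} (hg : g ∈ braidSubgroup σ m)
    (hact : ∀ y : FreeGroup α, g • y = y) : g = 1 := by
  induction m generalizing σ e d g with
  | zero => simpa [braidSubgroup] using hg
  | succ m ih =>
    have hB := isTypeBSeq h.toIsBraidSeq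
    obtain ⟨k, hk, hmem⟩ := exists_mul_prodSeq_inv_mem h.toIsBraidSeq hg
    obtain ⟨u, hu, b, hb, hub⟩ := hB.exists_mul_of_mem_sup hmem
    obtain ⟨W, hW, hφ⟩ := h.exists_smul_zero_eq hu
    have hk0 : k = 0 := by
      by_contra hk0
      refine h.ne hk (by omega) hk0 (eq_of_isConj_of (isConj_iff.2 ⟨W⁻¹, ?_⟩))
      have : (u * b) • FreeGroup.of (e 0) = FreeGroup.of (e k) := by
        rw [hub, mul_smul, h.prodSeq_inv_smul hk, hact]
      rw [← this, mul_smul, h.smul_zero_of_mem hb, hW]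
      group
    subst hk0
    rw [prodSeq, inv_one, mul_one] at hub
    subst hub
    have hb1 : b = 1 := by
      refine ih h.shift hb fun y => ?_
      have hfix : (MulDistribMulAction.toMonoidHom (FreeGroup α) b) = MonoidHom.id _ := by
        ext a
        by_cases ha : a = e 0
        · subst ha
          exact h.smul_zero_of_mem hb
        · have h1 := congrArg (killHom (e 0)) (hact (FreeGroup.of a))
          rwa [mul_smul, h.killHom_smul_of_mem_conjSubgroup hu, h.killHom_smul_of_mem hb,
            killHom_of_ne ha] at h1
      exact DFunLike.congr_fun hfix y
    subst hb1
    have hW0 := hact (FreeGroup.of (e 0))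
    rw [mul_one, hW, mul_inv_eq_iff_eq_mul] at hW0
    rw [FreeGroup.map_eq_one_of_commute (killHom (e 0)) (FreeGroup.of_ne_one _) (killHom_self _)
      (show Commute _ W from hW0.symm), map_one] at hφ
    rw [mul_one, ← inv_inv u, ← hφ, inv_one]

end IsArtinSeq

end ArtinAction

namespace IsArtinSeq

variable {α : Type*} [DecidableEq α] {G : Type*} [Group G] [MulDistribMulAction G (FreeGroup α)]
  {σ : ℕ → G} {e : ℕ → α} {d : α → ℕ} {m : ℕ}

theorem prodSeq_smul_of_gt (h : IsArtinSeq σ e d m) {j k : ℕ} (hjk : j < k) (hk : k ≤ m) :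
    prodSeq σ j • FreeGroup.of (e k) = FreeGroup.of (e k) := by
  induction j with
  | zero => exact one_smul _ _
  | succ j ih =>
    rw [prodSeq, mul_smul, h.smul_of_ne (by omega) (h.ne hk (by omega) (by omega))
      (h.ne hk (by omega) (by omega)), ih (by omega)]

theorem prodSeq_smul_of_lt (h : IsArtinSeq σ e d m) {j k : ℕ} (hkj : k < j) (hj : j ≤ m) :
    prodSeq σ j • FreeGroup.of (e k) =
      FreeGroup.of (e 0) * FreeGroup.of (e (k + 1)) * (FreeGroup.of (e 0))⁻¹ := by
  induction j, hkj using Nat.le_induction with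
  | base =>
    have hk : prodSeq σ k • FreeGroup.of (e k) = FreeGroup.of (e 0) := by
      rw [← h.prodSeq_inv_smul (by omega), smul_inv_smul]
    rw [prodSeq, mul_smul, h.smul_left (by omega), smul_mul', smul_mul', smul_inv', hk,
      h.prodSeq_smul_of_gt (lt_add_one k) hj]
  | succ j hkj ih =>
    rw [prodSeq, mul_smul, h.smul_of_ne (by omega) (h.ne (by omega) (by omega) (by omega))
      (h.ne (by omega) (by omega) (by omega)), ih (by omega)]

end IsArtinSeq

/-- A family `s` satisfying the affine braid relations and an element `τ` rotating it, in a group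
acting on the free group on `ZMod n` by Artin automorphisms and by the rotation of generators, and
graded by a degree for which `s i` has degree `0` and `τ` has degree `1`. -/
structure IsAffineArtinAction {n : ℕ} {E : Type*} [Group E]
    [MulDistribMulAction E (FreeGroup (ZMod n))] (s : ZMod n → E) (τ : E)
    (deg : E →* Multiplicative ℤ) : Prop where
  braid : ∀ i, s i * s (i + 1) * s i = s (i + 1) * s i * s (i + 1)
  comm : ∀ i j, i - j ≠ 1 → i - j ≠ -1 → Commute (s i) (s j)
  rotate : ∀ i, τ * s i * τ⁻¹ = s (i + 1)
  smul_eq : ∀ i (y : FreeGroup (ZMod n)), s i • y = artinHom i (i + 1) y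
  rotate_smul : ∀ i : ZMod n, τ • FreeGroup.of i = FreeGroup.of (i + 1)
  deg_gen : ∀ i, deg (s i) = 1
  deg_rotate : deg τ = Multiplicative.ofAdd 1

theorem commute_of_rotate {G : Type*} [Group G] {s₀ s₁ s₂ q r t : G} (hq : t * q * t⁻¹ = r)
    (h₀ : t * s₀ * t⁻¹ = s₁) (h₂ : t * s₂ * t⁻¹ = s₀) (h : r⁻¹ * s₁ * r = q * s₂ * q⁻¹) :
    Commute s₀ (s₀ * q * t⁻¹ * (s₀⁻¹ * (s₀ * q * t⁻¹) * s₀)) := by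
  have hx : Commute s₀ (q * t⁻¹ * q * t⁻¹) := by
    have e₁ : q * t⁻¹ * q * t⁻¹ * s₀ = q * t⁻¹ * (q * s₂ * q⁻¹) * q * t⁻¹ := by
      rw [← h₂]; group
    rw [commute_iff_eq, e₁, ← h, ← hq, ← h₀]
    group
  have := ((Commute.refl s₀).mul_right hx).mul_right (Commute.refl s₀)
  have he : s₀ * q * t⁻¹ * (s₀⁻¹ * (s₀ * q * t⁻¹) * s₀) = s₀ * (q * t⁻¹ * q * t⁻¹) * s₀ := by
    group
  rw [he]
  exact this

namespace IsAffineArtinAction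

variable {l : ℕ} {E : Type*} [Group E] [MulDistribMulAction E (FreeGroup (ZMod (l + 2)))]
  {s : ZMod (l + 2) → E} {τ : E} {deg : E →* Multiplicative ℤ}

theorem isBraidSeq (h : IsAffineArtinAction s τ deg) (c : ZMod (l + 2)) :
    IsBraidSeq (fun i : ℕ => s (c + i)) (l + 1) where
  braid i hi := by
    have := h.braid (c + i)
    rwa [add_assoc, ← Nat.cast_succ] at this
  comm i j hij hj := by
    refine h.comm _ _ (fun he => ?_) (fun he => ?_)
    · have he' : ((i : ℕ) : ZMod (l + 2)) = ((j + 1 : ℕ) : ZMod (l + 2)) := by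
        push_cast
        linear_combination he
      rw [ZMod.natCast_eq_natCast_iff', Nat.mod_eq_of_lt (by omega),
        Nat.mod_eq_of_lt (by omega)] at he'
      omega
    · have he' : ((i + 1 : ℕ) : ZMod (l + 2)) = ((j : ℕ) : ZMod (l + 2)) := by
        push_cast
        linear_combination he
      rw [ZMod.natCast_eq_natCast_iff', Nat.mod_eq_of_lt (by omega),
        Nat.mod_eq_of_lt (by omega)] at he'
      omega

theorem isArtinSeq (h : IsAffineArtinAction s τ deg) :
    IsArtinSeq (fun i : ℕ => s i) (fun i : ℕ => (i : ZMod (l + 2))) ZMod.val (l + 1) where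
  toIsBraidSeq := by simpa using h.isBraidSeq 0
  leftInv i hi := ZMod.val_cast_of_lt (by omega)
  smul_eq i hi y := by
    rw [h.smul_eq, Nat.cast_succ]

/-- The element of the extended group acting as conjugation by the generator `0`. -/
abbrev base (s : ZMod (l + 2) → E) (τ : E) : E := prodSeq (fun i : ℕ => s i) (l + 1) * τ⁻¹

theorem rotate_inv (h : IsAffineArtinAction s τ deg) (i : ZMod (l + 2)) :
    τ⁻¹ * s (i + 1) = s i * τ⁻¹ := by
  rw [← h.rotate i]
  group

theorem isTypeBSeq (h : IsAffineArtinAction s τ deg) :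
    IsTypeBSeq (fun i : ℕ => s i) (base s τ) (l + 1) where
  toIsBraidSeq := h.isArtinSeq.toIsBraidSeq
  comm_base i hi him := by
    obtain ⟨j, rfl⟩ := Nat.exists_eq_add_of_le' hi
    have hp := h.isArtinSeq.prodSeq_mul him le_rfl
    rw [commute_iff_eq, mul_assoc, Nat.cast_succ, h.rotate_inv, ← mul_assoc, hp, Nat.cast_succ,
      mul_assoc]
  comm_conj _ := by
    have hprod : prodSeq (fun i : ℕ => s i) (l + 1) =
        s 0 * prodSeq (fun i : ℕ => s (1 + i)) l := by
      rw [prodSeq_succ_eq]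
      simp only [Nat.cast_zero, Nat.cast_succ, add_comm]
    have hrot : τ * prodSeq (fun i : ℕ => s (1 + i)) l * τ⁻¹ =
        prodSeq (fun i : ℕ => s (1 + (i + 1 : ℕ))) l := by
      have := map_prodSeq (MulAut.conj τ).toMonoidHom (fun i : ℕ => s (1 + i)) l
      simpa [h.rotate, add_assoc] using this
    have hlast : τ * s (1 + (l : ℕ)) * τ⁻¹ = s 0 := by
      rw [h.rotate]
      congr 1
      have := ZMod.natCast_self (l + 2)
      push_cast at this
      linear_combination this
    have hconj := (h.isBraidSeq 1).conjSeq_shift (lt_add_one l)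
    have h01 := h.rotate 0
    rw [zero_add] at h01
    simp only [conjSeq, Nat.cast_zero, add_zero] at hconj
    rw [base, hprod, Nat.cast_zero]
    exact commute_of_rotate hrot h01 hlast hconj

theorem base_smul (h : IsAffineArtinAction s τ deg) (y : FreeGroup (ZMod (l + 2))) :
    base s τ • y = FreeGroup.of 0 * y * (FreeGroup.of 0)⁻¹ := by
  suffices hs : MulDistribMulAction.toMonoidHom (FreeGroup (ZMod (l + 2))) (base s τ) =
      (MulAut.conj (FreeGroup.of 0)).toMonoidHom from DFunLike.congr_fun hs y
  ext j
  obtain ⟨i, rfl⟩ : ∃ i, i + 1 = j := ⟨j - 1, sub_add_cancel j 1⟩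
  have hi := ZMod.natCast_zmod_val i
  have hlt := ZMod.val_lt i
  have hA := h.isArtinSeq
  have hτ : τ⁻¹ • FreeGroup.of (i + 1) = FreeGroup.of i := by
    rw [inv_smul_eq_iff, h.rotate_smul]
  change base s τ • FreeGroup.of (i + 1) = FreeGroup.of 0 * FreeGroup.of (i + 1) * _
  rw [mul_smul, hτ]
  rcases Nat.lt_or_ge i.val (l + 1) with hil | hil
  · have := hA.prodSeq_smul_of_lt hil le_rfl
    simpa only [Nat.cast_zero, Nat.cast_succ, hi] using this
  · have hval : i.val = l + 1 := by omega
    have := hA.prodSeq_inv_smul (le_refl (l + 1))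
    rw [inv_smul_eq_iff, ← hval, hi, Nat.cast_zero] at this
    rw [hval] at this
    have hi1 : i + 1 = 0 := by
      rw [← hi, hval]
      exact_mod_cast ZMod.natCast_self (l + 2)
    rw [← this, hi1, mul_inv_cancel_right]

/-- The homomorphism from the free group to the extended group, through which inner automorphisms
are realised. -/
abbrev innerHom (s : ZMod (l + 2) → E) (τ : E) : FreeGroup (ZMod (l + 2)) →* E :=
  FreeGroup.lift fun j => conjSeq (fun i : ℕ => s i) (base s τ) j.val

theorem innerHom_smul (h : IsAffineArtinAction s τ deg) (w y : FreeGroup (ZMod (l + 2))) :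
    innerHom s τ w • y = w * y * w⁻¹ := by
  suffices hs : (MulDistribMulAction.toMulAut E (FreeGroup (ZMod (l + 2)))).comp (innerHom s τ) =
      MulAut.conj from DFunLike.congr_fun (DFunLike.congr_fun hs w) y
  refine FreeGroup.ext_hom _ _ fun j => ?_
  ext1 y
  change innerHom s τ (FreeGroup.of j) • y = FreeGroup.of j * y * (FreeGroup.of j)⁻¹
  have hj := h.isArtinSeq.prodSeq_inv_smul (Nat.lt_succ_iff.1 (ZMod.val_lt j))
  rw [ZMod.natCast_zmod_val, Nat.cast_zero] at hj
  rw [FreeGroup.lift_apply_of, conjSeq, mul_smul, mul_smul, h.base_smul, smul_mul', smul_mul',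
    inv_smul_smul, smul_inv', hj]

theorem deg_prodSeq (h : IsAffineArtinAction s τ deg) (k : ℕ) :
    deg (prodSeq (fun i : ℕ => s i) k) = 1 := by
  induction k with
  | zero => exact map_one deg
  | succ k ih => rw [prodSeq, map_mul, ih, h.deg_gen, one_mul]

theorem deg_innerHom_of (h : IsAffineArtinAction s τ deg) (j : ZMod (l + 2)) :
    deg (innerHom s τ (FreeGroup.of j)) = Multiplicative.ofAdd (-1) := by
  rw [FreeGroup.lift_apply_of, conjSeq, map_mul, map_mul, map_inv, map_mul, map_inv,
    h.deg_prodSeq, h.deg_prodSeq, h.deg_rotate]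
  rfl

theorem deg_innerHom_prodSeq_ne (h : IsAffineArtinAction s τ deg) :
    (deg.comp (innerHom s τ)) (prodSeq (fun j : ℕ => FreeGroup.of (j : ZMod (l + 2))) (l + 1 + 1))
      ≠ 1 := by
  have : ∀ k, (deg.comp (innerHom s τ))
      (prodSeq (fun j : ℕ => FreeGroup.of (j : ZMod (l + 2))) k) =
      Multiplicative.ofAdd (-(k : ℤ)) := by
    intro k
    induction k with
    | zero => exact map_one _
    | succ k ih =>
      rw [prodSeq, map_mul, ih, MonoidHom.comp_apply, h.deg_innerHom_of, ← ofAdd_add]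
      congr 1
      push_cast
      ring
  rw [this, Ne, ofAdd_eq_one]
  omega

theorem smul_eq_self_of_commute (h : IsAffineArtinAction s τ deg) {z : E}
    (hz : ∀ g, deg g = 1 → Commute z g) (y : FreeGroup (ZMod (l + 2))) : z • y = y := by
  have : Fact (1 < l + 2) := ⟨by omega⟩
  have hfix : ∀ v, deg (innerHom s τ v) = 1 → z • v = v := by
    intro v hv
    have h1 : v⁻¹ * z • v = 1 := FreeGroup.eq_one_of_forall_commute fun y => by
      have h2 := congrArg (fun g => g • z⁻¹ • y) (hz _ hv).eq
      simp only [mul_smul, h.innerHom_smul, smul_mul', smul_inv', smul_inv_smul] at h2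
      rw [commute_iff_eq, mul_assoc, inv_mul_eq_iff_eq_mul]
      rw [mul_inv_eq_iff_eq_mul] at h2
      rw [h2]
      group
    rw [inv_mul_eq_one] at h1
    exact h1.symm
  have hdeg : ∀ i v, deg (innerHom s τ v) = 1 →
      Commute ((FreeGroup.of i)⁻¹ * z • FreeGroup.of i) v := by
    intro i v hv
    have h1 := hfix (FreeGroup.of i * v * (FreeGroup.of i)⁻¹) (by
      rw [map_mul, map_mul, map_inv, map_mul, map_mul, map_inv, hv, mul_one, mul_inv_cancel])
    rw [smul_mul', smul_mul', smul_inv', hfix v hv, mul_inv_eq_iff_eq_mul] at h1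
    rw [commute_iff_eq, mul_assoc, h1]
    group
  have hgen : ∀ i : ZMod (l + 2), z • FreeGroup.of i = FreeGroup.of i := by
    intro i
    by_contra hne
    have hne' : (FreeGroup.of i)⁻¹ * z • FreeGroup.of i ≠ 1 := by
      rw [Ne, inv_mul_eq_one]
      exact fun he => hne he.symm
    obtain ⟨j, hj⟩ := exists_ne i
    refine FreeGroup.not_commute_of_mul_inv hj.symm
      (FreeGroup.commute_of_commute hne' (hdeg i _ ?_) (hdeg i _ ?_))
    · rw [map_mul, map_inv, map_mul, map_inv, h.deg_innerHom_of, h.deg_innerHom_of,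
        mul_inv_cancel]
    · rw [map_mul, map_inv, map_mul, map_inv, h.deg_innerHom_of, h.deg_innerHom_of,
        inv_mul_cancel]
  have hid : MulDistribMulAction.toMonoidHom (FreeGroup (ZMod (l + 2))) z = MonoidHom.id _ := by
    ext i
    exact hgen i
  exact DFunLike.congr_fun hid y

theorem closure_le (h : IsAffineArtinAction s τ deg) :
    Subgroup.closure (Set.range s) ≤ conjSubgroup (fun i : ℕ => s i) (base s τ) (l + 1) ⊔
      braidSubgroup (fun i : ℕ => s i) (l + 1) := by
  set K := conjSubgroup (fun i : ℕ => s i) (base s τ) (l + 1) ⊔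
      braidSubgroup (fun i : ℕ => s i) (l + 1)
  have hlow : ∀ i : ℕ, i < l + 1 → s i ∈ K := fun i hi =>
    Subgroup.mem_sup_right (mem_braidSubgroup (σ := fun i : ℕ => s i) hi)
  have hprod : prodSeq (fun i : ℕ => s i) (l + 1) ∈ K :=
    Subgroup.mem_sup_right (prodSeq_mem_braidSubgroup le_rfl)
  have hbase : base s τ ∈ K := by
    have := conjSeq_mem_conjSubgroup (σ := fun i : ℕ => s i) (a := base s τ) (Nat.zero_le (l + 1))
    refine Subgroup.mem_sup_left ?_
    simpa [conjSeq, prodSeq] using this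
  have hτ : τ ∈ K := by
    have : τ = (base s τ)⁻¹ * prodSeq (fun i : ℕ => s i) (l + 1) := by rw [base]; group
    rw [this]
    exact mul_mem (inv_mem hbase) hprod
  refine (Subgroup.closure_le _).2 ?_
  rintro _ ⟨i, rfl⟩
  have hi := ZMod.natCast_zmod_val i
  have hlt := ZMod.val_lt i
  rcases Nat.lt_or_ge i.val (l + 1) with hil | hil
  · exact hi ▸ hlow _ hil
  · have hval : i.val = l + 1 := by omega
    have : s i = τ * s (l : ℕ) * τ⁻¹ := by
      rw [h.rotate, ← hi, hval, Nat.cast_succ]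
    rw [this]
    exact mul_mem (mul_mem hτ (hlow l (by omega))) (inv_mem hτ)

theorem eq_one_of_commute (h : IsAffineArtinAction s τ deg) {z : E}
    (hmem : z ∈ Subgroup.closure (Set.range s)) (hz : ∀ g, deg g = 1 → Commute z g) : z = 1 := by
  have hact := h.smul_eq_self_of_commute hz
  obtain ⟨u, hu, b, hb, rfl⟩ := h.isTypeBSeq.exists_mul_of_mem_sup (h.closure_le hmem)
  have hrange : conjSubgroup (fun i : ℕ => s i) (base s τ) (l + 1) ≤ (innerHom s τ).range := by
    refine (Subgroup.closure_le _).2 ?_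
    rintro _ ⟨k, hk, rfl⟩
    refine ⟨FreeGroup.of k, ?_⟩
    rw [FreeGroup.lift_apply_of, ZMod.val_cast_of_lt (by omega)]
  obtain ⟨w, rfl⟩ := hrange hu
  have hker : Subgroup.closure (Set.range s) ≤ deg.ker := by
    refine (Subgroup.closure_le _).2 ?_
    rintro _ ⟨i, rfl⟩
    exact h.deg_gen i
  have hsub : braidSubgroup (fun i : ℕ => s i) (l + 1) ≤ Subgroup.closure (Set.range s) := by
    refine Subgroup.closure_mono ?_
    rintro _ ⟨i, _, rfl⟩
    exact ⟨i, rfl⟩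
  have hdegw : (deg.comp (innerHom s τ)) w = 1 := by
    have h1 : deg (innerHom s τ w * b) = 1 := hker hmem
    have h2 : deg b = 1 := hker (hsub hb)
    rwa [map_mul, h2, mul_one] at h1
  have hw : w = 1 := by
    by_contra hw
    refine h.deg_innerHom_prodSeq_ne (FreeGroup.map_eq_one_of_commute _ hw hdegw ?_)
    have h1 := hact (prodSeq (fun j : ℕ => FreeGroup.of (j : ZMod (l + 2))) (l + 1 + 1))
    rwa [mul_smul, h.isArtinSeq.smul_prodSeq_of_mem hb, h.innerHom_smul,
      mul_inv_eq_iff_eq_mul] at h1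
  subst hw
  rw [map_one, one_mul] at hact ⊢
  exact h.isArtinSeq.eq_one_of_forall_smul_eq hb hact

end IsAffineArtinAction

theorem MulAut.freeGroup_ext {α : Type*} {f g : MulAut (FreeGroup α)}
    (h : ∀ a, f (FreeGroup.of a) = g (FreeGroup.of a)) : f = g := by
  ext y
  exact DFunLike.congr_fun (FreeGroup.ext_hom f.toMonoidHom g.toMonoidHom h) y

section ArtinAut

variable {α : Type*} [DecidableEq α]

/-- The endomorphism `p ↦ q`, `q ↦ q⁻¹ p q` of a free group, inverse to `artinHom p q`. -/
def artinInvHom (p q : α) : FreeGroup α →* FreeGroup α :=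
  FreeGroup.lift fun a =>
    if a = q then (FreeGroup.of q)⁻¹ * FreeGroup.of p * FreeGroup.of q
    else if a = p then FreeGroup.of q else FreeGroup.of a

/-- The Artin automorphism of a free group: `p ↦ p q p⁻¹`, `q ↦ p`, fixing the other generators. -/
def artinAut {p q : α} (h : p ≠ q) : MulAut (FreeGroup α) :=
  MonoidHom.toMulEquiv (artinHom p q) (artinInvHom p q)
    (by
      ext a
      by_cases hp : a = p
      · subst hp
        simp [artinInvHom, h, mul_assoc]
      by_cases hq : a = q
      · subst hq
        simp [artinInvHom, artinHom_right h, h]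
      simp [artinInvHom, artinHom_of_ne hp hq, hp, hq])
    (by
      ext a
      by_cases hp : a = p
      · subst hp
        simp [artinInvHom, artinHom_right h, h]
      by_cases hq : a = q
      · subst hq
        simp [artinInvHom, artinHom_right h, mul_assoc]
      simp [artinInvHom, artinHom_of_ne hp hq, hp, hq])

theorem artinAut_apply {p q : α} (h : p ≠ q) (y : FreeGroup α) :
    artinAut h y = artinHom p q y := rfl

theorem artinAut_braid {p q r : α} (hpq : p ≠ q) (hqr : q ≠ r) (hpr : p ≠ r) :
    artinAut hpq * artinAut hqr * artinAut hpq = artinAut hqr * artinAut hpq * artinAut hqr := by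
  refine MulAut.freeGroup_ext fun a => ?_
  simp only [MulAut.mul_apply, artinAut_apply]
  by_cases hp : a = p
  · subst hp
    simp [artinHom_right, artinHom_of_ne, hpq, hqr.symm, hpr, hpr.symm, mul_assoc]
  by_cases hq : a = q
  · subst hq
    simp [artinHom_right, artinHom_of_ne, hpq, hqr, hqr.symm, hpr, hpr.symm]
  by_cases hr : a = r
  · subst hr
    simp [artinHom_right, artinHom_of_ne, hpq, hqr, hqr.symm, hpr, hpr.symm]
  simp [artinHom_of_ne, hp, hq, hr]

theorem artinAut_commute {p q p' q' : α} (h : p ≠ q) (h' : p' ≠ q') (hpp : p ≠ p') (hpq : p ≠ q')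
    (hqp : q ≠ p') (hqq : q ≠ q') : Commute (artinAut h) (artinAut h') := by
  refine MulAut.freeGroup_ext fun a => ?_
  simp only [MulAut.mul_apply, artinAut_apply]
  by_cases hp : a = p
  · subst hp
    simp [artinHom_of_ne, hpp, hpq, hqp, hqq]
  by_cases hq : a = q
  · subst hq
    simp [artinHom_of_ne, artinHom_right, h, hpp, hpq, hqp, hqq]
  by_cases hp' : a = p'
  · subst hp'
    simp [artinHom_of_ne, hp, hq, hpq.symm, hqq.symm]
  by_cases hq' : a = q'
  · subst hq'
    simp [artinHom_of_ne, artinHom_right, h', hp, hq, hpp.symm, hqp.symm]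
  simp [artinHom_of_ne, hp, hq, hp', hq']

end ArtinAut

namespace AffineBraidGroup

section Relations

variable {n : ℕ} {H : Type*} [Group H]

theorem lift_eq_one {f : ZMod n → H}
    (hb : ∀ i, f i * f (i + 1) * f i = f (i + 1) * f i * f (i + 1))
    (hc : ∀ i j, i - j ≠ 1 → i - j ≠ -1 → Commute (f i) (f j)) :
    ∀ r ∈ affineBraidRels n, FreeGroup.lift f r = 1 := by
  intro r hr
  unfold affineBraidRels at hr
  split_ifs at hr
  · exact hr.elim
  · rcases hr with ⟨i, rfl⟩ | ⟨i, j, h₁, h₂, rfl⟩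
    · simp only [braidRelWord, map_mul, map_inv, FreeGroup.lift_apply_of]
      rw [mul_inv_eq_one, hb]
    · simp only [commRelWord, map_mul, map_inv, FreeGroup.lift_apply_of]
      rw [mul_inv_eq_one, (hc i j h₁ h₂).eq]

theorem gen_braid (hn : 2 < n) (i : ZMod n) :
    affineBraidGen n i * affineBraidGen n (i + 1) * affineBraidGen n i =
      affineBraidGen n (i + 1) * affineBraidGen n i * affineBraidGen n (i + 1) := by
  rw [← mul_inv_eq_one]
  refine PresentedGroup.one_of_mem (rels := affineBraidRels n) (x := braidRelWord i (i + 1)) ?_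
  rw [affineBraidRels, if_neg hn.not_ge]
  exact Or.inl ⟨i, rfl⟩

theorem gen_commute (hn : 2 < n) (i j : ZMod n) (h₁ : i - j ≠ 1) (h₂ : i - j ≠ -1) :
    Commute (affineBraidGen n i) (affineBraidGen n j) := by
  rw [commute_iff_eq, ← mul_inv_eq_one]
  refine PresentedGroup.one_of_mem (rels := affineBraidRels n) (x := commRelWord i j) ?_
  rw [affineBraidRels, if_neg hn.not_ge]
  exact Or.inr ⟨i, j, h₁, h₂, rfl⟩

/-- The endomorphism `s i ↦ s (i + c)` of the affine braid group. -/
def shiftHom (hn : 2 < n) (c : ZMod n) : AffineBraidGroup n →* AffineBraidGroup n :=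
  PresentedGroup.toGroup (f := fun i => affineBraidGen n (i + c)) <| lift_eq_one
    (fun i => by simpa only [add_right_comm] using gen_braid hn (i + c))
    (fun i j h₁ h₂ => gen_commute hn _ _ (by simpa using h₁) (by simpa using h₂))

theorem shiftHom_gen (hn : 2 < n) (c i : ZMod n) :
    shiftHom hn c (affineBraidGen n i) = affineBraidGen n (i + c) :=
  PresentedGroup.toGroup.of _

theorem shiftHom_comp (hn : 2 < n) (c d : ZMod n) (h : d + c = 0) :
    (shiftHom hn c).comp (shiftHom hn d) = MonoidHom.id _ := by
  refine PresentedGroup.ext fun i => ?_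
  change shiftHom hn c (shiftHom hn d (affineBraidGen n i)) = affineBraidGen n i
  rw [shiftHom_gen, shiftHom_gen, add_assoc, h, add_zero]

/-- The rotation automorphism `s i ↦ s (i + 1)` of the affine braid group. -/
def rotation (hn : 2 < n) : MulAut (AffineBraidGroup n) :=
  MonoidHom.toMulEquiv (shiftHom hn 1) (shiftHom hn (-1)) (shiftHom_comp hn _ _ (by simp))
    (shiftHom_comp hn _ _ (by simp))

theorem rotation_gen (hn : 2 < n) (i : ZMod n) :
    rotation hn (affineBraidGen n i) = affineBraidGen n (i + 1) :=
  shiftHom_gen hn 1 i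

theorem ne_add_natCast {k : ℕ} (hk : 0 < k) (hkn : k < n) (i : ZMod n) : i ≠ i + k := by
  intro h
  rw [left_eq_add, ZMod.natCast_eq_zero_iff] at h
  exact absurd (Nat.le_of_dvd hk h) (by omega)

theorem ne_add_one (hn : 2 < n) (i : ZMod n) : i ≠ i + 1 := by
  simpa using ne_add_natCast one_pos (by omega) i

theorem ne_add_one_add_one (hn : 2 < n) (i : ZMod n) : i ≠ i + 1 + 1 := by
  simpa [add_assoc, one_add_one_eq_two] using ne_add_natCast two_pos hn i

/-- The action of the affine braid group on the free group on `ZMod n` by Artin automorphisms. -/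
def artinRep (hn : 2 < n) : AffineBraidGroup n →* MulAut (FreeGroup (ZMod n)) :=
  PresentedGroup.toGroup (f := fun i => artinAut (ne_add_one hn i)) <| lift_eq_one
    (fun i => artinAut_braid _ _ (ne_add_one_add_one hn i))
    (fun i j h₁ h₂ => by
      by_cases hij : i = j
      · subst hij
        exact Commute.refl _
      · refine artinAut_commute _ _ hij (fun h => h₁ ?_) (fun h => h₂ ?_) (by simpa using hij)
        · rw [h, add_sub_cancel_left]
        · rw [← h]
          ring)

theorem artinRep_gen (hn : 2 < n) (i : ZMod n) :
    artinRep hn (affineBraidGen n i) = artinAut (ne_add_one hn i) :=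
  PresentedGroup.toGroup.of _

/-- The rotation of the generators of the free group on `ZMod n`. -/
def freeRotation (n : ℕ) : MulAut (FreeGroup (ZMod n)) :=
  FreeGroup.freeGroupCongr (Equiv.addRight 1)

theorem freeRotation_of (i : ZMod n) :
    freeRotation n (FreeGroup.of i) = FreeGroup.of (i + 1) := by
  simp [freeRotation]

theorem freeRotation_mul_artinAut (hn : 2 < n) (i : ZMod n) :
    freeRotation n * artinAut (ne_add_one hn i) =
      artinAut (ne_add_one hn (i + 1)) * freeRotation n := by
  refine MulAut.freeGroup_ext fun a => ?_
  simp only [MulAut.mul_apply, artinAut_apply, freeRotation_of]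
  by_cases hp : a = i
  · subst hp
    simp [freeRotation_of]
  by_cases hq : a = i + 1
  · subst hq
    rw [artinHom_right (ne_add_one hn i), artinHom_right (ne_add_one hn (i + 1)), freeRotation_of]
  rw [artinHom_of_ne hp hq, freeRotation_of, artinHom_of_ne (by simpa using hp) (by simpa using hq)]

theorem artinRep_rotation (hn : 2 < n) :
    (artinRep hn).comp (rotation hn).toMonoidHom =
      (MulAut.conj (freeRotation n)).toMonoidHom.comp (artinRep hn) := by
  refine PresentedGroup.ext fun i => ?_
  change artinRep hn (rotation hn (affineBraidGen n i)) =
    freeRotation n * artinRep hn (affineBraidGen n i) * (freeRotation n)⁻¹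
  rw [rotation_gen, artinRep_gen, artinRep_gen, freeRotation_mul_artinAut hn, mul_inv_cancel_right]

theorem artinRep_rotation_zpow (hn : 2 < n) (k : ℤ) (x : AffineBraidGroup n) :
    artinRep hn ((rotation hn ^ k) x) =
      freeRotation n ^ k * artinRep hn x * (freeRotation n ^ k)⁻¹ := by
  have hstep (x : AffineBraidGroup n) : artinRep hn (rotation hn x) =
      freeRotation n * artinRep hn x * (freeRotation n)⁻¹ :=
    DFunLike.congr_fun (artinRep_rotation hn) x
  induction k using Int.induction_on generalizing x with
  | zero => simp
  | succ k ih =>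
    rw [zpow_add_one, zpow_add_one, MulAut.mul_apply, ih, hstep]
    group
  | pred k ih =>
    have hinv : artinRep hn ((rotation hn)⁻¹ x) =
        (freeRotation n)⁻¹ * artinRep hn x * freeRotation n := by
      have := hstep ((rotation hn)⁻¹ x)
      rw [MulAut.apply_inv_self] at this
      rw [this]
      group
    rw [zpow_sub_one, zpow_sub_one, MulAut.mul_apply, ih, hinv]
    group

/-- The extended affine braid group: the semidirect product of the affine braid group with the
infinite cyclic group generated by the rotation. -/
abbrev Extended (hn : 2 < n) : Type :=
  AffineBraidGroup n ⋊[zpowersHom (MulAut (AffineBraidGroup n)) (rotation hn)] Multiplicative ℤ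

/-- The action of the extended affine braid group on the free group on `ZMod n`. -/
def extendedRep (hn : 2 < n) : Extended hn →* MulAut (FreeGroup (ZMod n)) :=
  SemidirectProduct.lift (artinRep hn) (zpowersHom _ (freeRotation n)) fun g =>
    MonoidHom.ext fun x => artinRep_rotation_zpow hn g.toAdd x

instance (hn : 2 < n) : MulDistribMulAction (Extended hn) (FreeGroup (ZMod n)) :=
  MulDistribMulAction.compHom _ (extendedRep hn)

theorem extended_smul_def (hn : 2 < n) (g : Extended hn) (y : FreeGroup (ZMod n)) :
    g • y = extendedRep hn g y := rfl

theorem isAffineArtinAction (hn : 2 < n) :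
    IsAffineArtinAction
      (fun i : ZMod n => (SemidirectProduct.inl (affineBraidGen n i) : Extended hn))
      (SemidirectProduct.inr (Multiplicative.ofAdd 1)) SemidirectProduct.rightHom where
  braid i := by simp only [← map_mul, gen_braid hn i]
  comm i j h₁ h₂ := (gen_commute hn i j h₁ h₂).map _
  rotate i := by
    rw [← map_inv, ← SemidirectProduct.inl_aut]
    simp [rotation_gen]
  smul_eq i y := by
    rw [extended_smul_def, extendedRep, SemidirectProduct.lift_inl, artinRep_gen, artinAut_apply]
  rotate_smul i := by
    rw [extended_smul_def, extendedRep, SemidirectProduct.lift_inr]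
    simp [freeRotation_of]
  deg_gen i := SemidirectProduct.rightHom_inl _
  deg_rotate := SemidirectProduct.rightHom_inr _

theorem eq_one_of_mem_center (hn : 2 < n) {z : AffineBraidGroup n}
    (hz : z ∈ Subgroup.center (AffineBraidGroup n)) : z = 1 := by
  obtain ⟨l, rfl⟩ := Nat.exists_eq_add_of_le' hn.le
  refine SemidirectProduct.inl_injective
    (((isAffineArtinAction hn).eq_one_of_commute ?_ fun g hg => ?_).trans (map_one _).symm)
  · have hmem : z ∈ Subgroup.closure (Set.range (affineBraidGen (l + 2))) := by
      change z ∈ Subgroup.closure (Set.range PresentedGroup.of)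
      rw [PresentedGroup.closure_range_of]
      trivial
    have := Subgroup.mem_map_of_mem
      (SemidirectProduct.inl : AffineBraidGroup (l + 2) →* Extended hn) hmem
    rwa [MonoidHom.map_closure, ← Set.range_comp] at this
  · have hg' : g ∈ (SemidirectProduct.inl : AffineBraidGroup (l + 2) →* Extended hn).range := by
      rw [SemidirectProduct.range_inl_eq_ker_rightHom]
      exact hg
    obtain ⟨x, rfl⟩ := hg'
    exact Commute.map (Subgroup.mem_center_iff.1 hz x).symm _

end Relations

theorem eq_one_of_mem_center_two {z : AffineBraidGroup 2}
    (hz : z ∈ Subgroup.center (AffineBraidGroup 2)) : z = 1 := by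
  have hrel : ∀ r ∈ affineBraidRels 2, FreeGroup.lift FreeGroup.of r = 1 := by
    intro r hr
    rw [affineBraidRels, if_pos le_rfl] at hr
    exact hr.elim
  have hinv (w : FreeGroup (ZMod 2)) :
      PresentedGroup.toGroup hrel (PresentedGroup.mk (affineBraidRels 2) w) = w :=
    DFunLike.congr_fun (FreeGroup.ext_hom ((PresentedGroup.toGroup hrel).comp
      (PresentedGroup.mk (affineBraidRels 2))) (MonoidHom.id _) fun _ =>
        PresentedGroup.toGroup.of hrel) w
  obtain ⟨w, rfl⟩ := PresentedGroup.mk_surjective _ z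
  have hw : w = 1 := FreeGroup.eq_one_of_forall_commute fun y => by
    have := congrArg (PresentedGroup.toGroup hrel)
      (Subgroup.mem_center_iff.1 hz (PresentedGroup.mk _ y)).symm
    rwa [map_mul, map_mul, hinv, hinv] at this
  rw [hw, map_one]

end AffineBraidGroup

/-- For every `n ≥ 2`, the center of the affine braid group `B(Ã_{n−1})` is trivial. -/
theorem affineBraidGroup_center_trivial (n : ℕ) (hn : 2 ≤ n) :
    Subgroup.center (AffineBraidGroup n) = ⊥ := by
  refine (Subgroup.eq_bot_iff_forall _).2 fun z hz => ?_
  rcases hn.eq_or_lt with rfl | hn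
  · exact AffineBraidGroup.eq_one_of_mem_center_two hz
  · exact AffineBraidGroup.eq_one_of_mem_center hn hz
end

section
/- For every N ≥ 2 there is a well-defined injective group homomorphism φ_N : B(Ã_{N−1}) → B(A_N) such that φ_N(s_i) = s_{i+1} for 0 ≤ i ≤ N−2 and φ_N(s_{N−1}) = s_N Π s_1 Π^{−1} s_N^{−1}, where Π = s_N s_{N−1} ⋯ s_1 ∈ B(A_N). -/
/-- The defining relations of the braid group `B(A_n)` on generators `s_1, …, s_n`
(indexed here by `Fin n`, with index `i` corresponding to `s_{i+1}`): the braid relations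
for adjacent indices and the commutation relations `s_i s_j = s_j s_i` for `|i − j| > 1`. -/
def braidRels (n : ℕ) : Set (FreeGroup (Fin n)) :=
  {r | (∃ i j : Fin n, (i : ℕ) + 1 = (j : ℕ) ∧ r = braidRelWord i j) ∨
       (∃ i j : Fin n, ((i : ℕ) + 1 < (j : ℕ) ∨ (j : ℕ) + 1 < (i : ℕ)) ∧ r = commRelWord i j)}

/-- The braid group `B(A_n)` with generators `s_1, …, s_n`. -/
abbrev BraidGroup (n : ℕ) := PresentedGroup (braidRels n)

/-- The generator `s_{i+1}` of the braid group `B(A_n)`, for `i : Fin n`. -/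
def braidGen (n : ℕ) (i : Fin n) : BraidGroup n := PresentedGroup.of i

/-- The element `Π = s_N s_{N-1} ⋯ s_1` of the braid group `B(A_N)`. -/
def braidPi (N : ℕ) : BraidGroup N :=
  (List.ofFn fun j : Fin N => braidGen N j.rev).prod

/-- The elements `u 0, …, u (n - 1)` of a group satisfy the relations of the braid group on
`n + 1` strands. -/
structure IsBraidSeq_s3 {G : Type*} [Group G] (n : ℕ) (u : ℕ → G) : Prop where
  braid : ∀ i, i + 1 < n → u i * u (i + 1) * u i = u (i + 1) * u i * u (i + 1)
  comm : ∀ i j, i + 1 < j → j < n → u i * u j = u j * u i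

/-- The descending product `u (n - 1) * ⋯ * u 0`. -/
def descProd {G : Type*} [Group G] (u : ℕ → G) : ℕ → G
  | 0 => 1
  | n + 1 => u n * descProd u n

section DescProd

variable {G : Type*} [Group G]

lemma descProd_zero (u : ℕ → G) : descProd u 0 = 1 := rfl

lemma descProd_succ (u : ℕ → G) (n : ℕ) : descProd u (n + 1) = u n * descProd u n := rfl

lemma descProd_succ_right (u : ℕ → G) (n : ℕ) :
    descProd u (n + 1) = descProd (fun i => u (i + 1)) n * u 0 := by
  induction n with
  | zero => simp [descProd]
  | succ n ih => rw [descProd_succ, ih, descProd_succ, mul_assoc]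

lemma descProd_semiconj {u v : ℕ → G} {g : G} {n : ℕ}
    (h : ∀ i < n, SemiconjBy g (u i) (v i)) :
    SemiconjBy g (descProd u n) (descProd v n) := by
  induction n with
  | zero => exact SemiconjBy.one_right g
  | succ n ih =>
    exact (h n (by omega)).mul_right (ih fun i hi => h i (by omega))

lemma IsBraidSeq_s3.mono {u : ℕ → G} {m n : ℕ} (h : IsBraidSeq_s3 n u) (hmn : m ≤ n) :
    IsBraidSeq_s3 m u :=
  ⟨fun i hi => h.braid i (by omega), fun i j hij hj => h.comm i j hij (by omega)⟩

lemma IsBraidSeq_s3.semiconj_descProd {u : ℕ → G} {n : ℕ} (h : IsBraidSeq_s3 n u) :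
    ∀ i, i + 1 < n → SemiconjBy (descProd u n) (u (i + 1)) (u i) := by
  induction n with
  | zero => intro i hi; omega
  | succ n ih =>
    intro i hi
    rcases Nat.lt_or_ge (i + 1) n with hin | hin
    · have hcomm : SemiconjBy (u n) (u i) (u i) := (h.comm i n hin (by omega)).symm
      exact hcomm.mul_left (ih (h.mono (by omega)) i hin)
    · obtain rfl : n = i + 1 := by omega
      have hc : SemiconjBy (u (i + 1)) (descProd u i) (descProd u i) :=
        descProd_semiconj fun j hj => (h.comm j (i + 1) (by omega) (by omega)).symm
      have hb := h.braid i (by omega)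
      simp only [SemiconjBy, descProd_succ] at hc ⊢
      calc u (i + 1) * (u i * descProd u i) * u (i + 1)
          = u (i + 1) * u i * (descProd u i * u (i + 1)) := by group
        _ = u (i + 1) * u i * u (i + 1) * descProd u i := by rw [← hc]; group
        _ = u i * (u (i + 1) * (u i * descProd u i)) := by rw [← hb]; group

lemma IsBraidSeq_s3.semiconj_descProd_sq {u : ℕ → G} {n : ℕ} (h : IsBraidSeq_s3 (n + 1) u) :
    SemiconjBy (descProd u (n + 1) * descProd u (n + 1)) (u 0) (u n) := by
  have hs : SemiconjBy (descProd u (n + 1)) (descProd (fun i => u (i + 1)) n) (descProd u n) :=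
    descProd_semiconj fun i hi => h.semiconj_descProd i (by omega)
  have hsq : descProd u (n + 1) * descProd u (n + 1) =
      descProd u n * descProd u (n + 1) * u 0 := by
    conv_lhs => rw [descProd_succ_right u n, ← mul_assoc, ← descProd_succ_right, hs.eq]
  calc descProd u (n + 1) * descProd u (n + 1) * u 0
      = u n * descProd u n * descProd u (n + 1) * u 0 := by rw [← descProd_succ]
    _ = u n * (descProd u n * descProd u (n + 1) * u 0) := by group
    _ = u n * (descProd u (n + 1) * descProd u (n + 1)) := by rw [← hsq]

end DescProd

/-- Elements `u 0, …, u (n - 1)` satisfying the braid relations, together with elements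
`A 0, …, A n`, each conjugate to the next one by an element of `u`, such that `u` and `A n`
satisfy the relations of the braid group of type `B`. -/
structure IsLoopFamily {K : Type*} [Group K] (n : ℕ) (u A : ℕ → K) : Prop where
  braidSeq : IsBraidSeq_s3 n u
  conj : ∀ i < n, A i * u i = u i * A (i + 1)
  comm : ∀ i j, i < n → j ≤ n → (i + 1 < j ∨ j < i) → u i * A j = A j * u i
  quad : ∀ i < n, u i * A (i + 1) * u i * A (i + 1) = A (i + 1) * u i * A (i + 1) * u i

section LoopFamily

variable {K : Type*} [Group K]

/-- The conjugates `A i = (u i ⋯ u (n - 1)) τ (u i ⋯ u (n - 1))⁻¹`, indexed by `n - i`. -/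
def loopConj (n : ℕ) (u : ℕ → K) (τ : K) : ℕ → K
  | 0 => τ
  | j + 1 => u (n - (j + 1)) * loopConj n u τ j * (u (n - (j + 1)))⁻¹

lemma quad_conj {s t A : K} (hst : s * t * s = t * s * t) (hsA : s * A = A * s)
    (hq : t * A * t * A = A * t * A * t) :
    s * (t * A * t⁻¹) * s * (t * A * t⁻¹) = (t * A * t⁻¹) * s * (t * A * t⁻¹) * s := by
  have h : t⁻¹ * s * t = s * t * s⁻¹ := by
    rw [eq_mul_inv_iff_mul_eq, mul_assoc, mul_assoc, inv_mul_eq_iff_eq_mul, ← mul_assoc,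
      ← mul_assoc, hst]
  have hA : s⁻¹ * A * s = A := by rw [mul_assoc, ← hsA, inv_mul_cancel_left]
  have hA' : s * A * s⁻¹ = A := by rw [hsA, mul_inv_cancel_right]
  calc s * (t * A * t⁻¹) * s * (t * A * t⁻¹)
      = t * ((t⁻¹ * s * t) * A * (t⁻¹ * s * t) * A) * t⁻¹ := by group
    _ = t * (s * t * (s⁻¹ * A * s) * t * (s⁻¹ * A * s) * s⁻¹) * t⁻¹ := by rw [h]; group
    _ = t * (s * (t * A * t * A) * s⁻¹) * t⁻¹ := by rw [hA]; group
    _ = t * ((s * A * s⁻¹) * (s * t * s⁻¹) * (s * A * s⁻¹) * (s * t * s⁻¹)) * t⁻¹ := by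
      rw [hq]; group
    _ = (t * A * t⁻¹) * s * (t * A * t⁻¹) * s := by rw [hA', ← h]; group

lemma commute_conj {x y A : K} (hxy : x * y * x = y * x * y) (hA : Commute x A) :
    Commute y (x * (y * A * y⁻¹) * x⁻¹) := by
  have h : SemiconjBy (x * y) x y := by rw [SemiconjBy, hxy, mul_assoc]
  have := (SemiconjBy.conj_iff (a := x) (x := A) (y := A) (b := x * y)).2 hA
  rw [h.eq, mul_inv_cancel_right] at this
  simpa [Commute, mul_assoc] using this

lemma isLoopFamily_loopConj {n : ℕ} {u : ℕ → K} {τ : K} (hu : IsBraidSeq_s3 n u)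
    (hτ : ∀ i, i + 1 < n → u i * τ = τ * u i)
    (hq : ∀ i, i + 1 = n → u i * τ * u i * τ = τ * u i * τ * u i) :
    IsLoopFamily n u (fun i => loopConj n u τ (n - i)) := by
  have hrec : ∀ i < n, loopConj n u τ (n - i) =
      u i * loopConj n u τ (n - (i + 1)) * (u i)⁻¹ := by
    intro i hi
    obtain ⟨d, rfl⟩ := Nat.exists_eq_add_of_lt hi
    have h1 : i + d + 1 - i = d + 1 := by omega
    have h2 : i + d + 1 - (i + 1) = d := by omega
    have h3 : i + d + 1 - (d + 1) = i := by omega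
    rw [h1, h2, loopConj, h3]
  generalize hA : (fun i => loopConj n u τ (n - i)) = A
  have hrec' : ∀ i < n, A i = u i * A (i + 1) * (u i)⁻¹ := by subst hA; exact hrec
  have hAn : A n = τ := by subst hA; simp [loopConj]
  have hcommuu : ∀ i j, i < n → j < n → (i + 1 < j ∨ j + 1 < i) → Commute (u i) (u j) := by
    rintro i j hi hj (h | h)
    · exact hu.comm i j h hj
    · exact (hu.comm j i h hi).symm
  have key : ∀ d j, j + d = n → (∀ i < n, (i + 1 < j ∨ j < i) → Commute (u i) (A j)) ∧
      ∀ i, i + 1 = j → u i * A j * u i * A j = A j * u i * A j * u i := by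
    intro d
    induction d using Nat.strong_induction_on with
    | _ d ih =>
    intro j hj
    rcases d with _ | d
    · obtain rfl : j = n := hj
      rw [hAn]
      exact ⟨fun i hi h => hτ i (by omega), hq⟩
    · obtain ⟨ihc, ihq⟩ := ih d (by omega) (j + 1) (by omega)
      rw [hrec' j (by omega)]
      refine ⟨fun i hi h => ?_, fun i hij => ?_⟩
      · by_cases hij : i = j + 1
        · subst hij
          rw [hrec' (j + 1) hi]
          have hc : Commute (u j) (A (j + 1 + 1)) :=
            (ih (d - 1) (by omega) (j + 1 + 1) (by omega)).1 j (by omega) (by omega)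
          exact commute_conj (hu.braid j hi) hc
        · have h1 : Commute (u i) (u j) := hcommuu i j hi (by omega) (by omega)
          exact (h1.mul_right (ihc i hi (by omega))).mul_right h1.inv_right
      · subst hij
        exact quad_conj (hu.braid i (by omega)) (ihc i (by omega) (by omega))
          (ihq (i + 1) rfl)
  refine ⟨hu, fun i hi => ?_, fun i j hi hj h => ?_, fun i hi => ?_⟩
  · rw [hrec' i hi]; group
  · exact (key (n - j) j (by omega)).1 i hi h
  · exact (key (n - (i + 1)) (i + 1) (by omega)).2 i rfl

/-- The action of the `i`-th standard generator of the braid group on `n + 2` strands on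
`n + 2` copies of `K`, induced from the left multiplication action of the type `B` subgroup.
The copies of `K` with index larger than `n + 1` are fixed. -/
def inducedGen (n : ℕ) (u A : ℕ → K) (i : Fin (n + 1)) : Equiv.Perm (ℕ × K) where
  toFun p :=
    if n + 1 < p.1 then p
    else if i + 1 < p.1 then (p.1, u i * p.2)
    else if p.1 = i + 1 then (i, p.2)
    else if p.1 = i then (i + 1, A i * p.2)
    else (p.1, u (i - 1) * p.2)
  invFun p :=
    if n + 1 < p.1 then p
    else if i + 1 < p.1 then (p.1, (u i)⁻¹ * p.2)
    else if p.1 = i then (i + 1, p.2)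
    else if p.1 = i + 1 then (i, (A i)⁻¹ * p.2)
    else (p.1, (u (i - 1))⁻¹ * p.2)
  left_inv p := by
    have := i.isLt
    obtain ⟨k, x⟩ := p
    dsimp only
    split_ifs <;> simp_all <;> omega
  right_inv p := by
    have := i.isLt
    obtain ⟨k, x⟩ := p
    dsimp only
    split_ifs <;> simp_all <;> omega

variable {n : ℕ} {u A : ℕ → K}

lemma inducedGen_of_gt (i : Fin (n + 1)) {k : ℕ} (x : K) (hk : n + 1 < k) :
    inducedGen n u A i (k, x) = (k, x) := if_pos hk

lemma inducedGen_of_succ_lt {i k : ℕ} (hi : i < n + 1) (x : K) (hk : k ≤ n + 1)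
    (h : i + 1 < k) : inducedGen n u A ⟨i, hi⟩ (k, x) = (k, u i * x) := by
  simp [inducedGen, h, hk.not_gt]

lemma inducedGen_of_eq_succ {i k : ℕ} (hi : i < n + 1) (x : K) (h : k = i + 1) :
    inducedGen n u A ⟨i, hi⟩ (k, x) = (i, x) := by
  have : ¬ n < i := by omega
  simp [inducedGen, h, this]

lemma inducedGen_of_eq {i k : ℕ} (hi : i < n + 1) (x : K) (h : k = i) :
    inducedGen n u A ⟨i, hi⟩ (k, x) = (i + 1, A i * x) := by
  have : ¬ n + 1 < i := by omega
  simp [inducedGen, h, this]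

lemma inducedGen_of_lt {i k : ℕ} (hi : i < n + 1) (x : K) (h : k < i) :
    inducedGen n u A ⟨i, hi⟩ (k, x) = (k, u (i - 1) * x) := by
  have h1 : ¬ n + 1 < k := by omega
  have h2 : ¬ i + 1 < k := by omega
  have h3 : k ≠ i + 1 := by omega
  simp [inducedGen, h1, h2, h3, h.ne]

lemma IsLoopFamily.inducedGen_braid (h : IsLoopFamily n u A) {i j : Fin (n + 1)}
    (hij : (i : ℕ) + 1 = j) :
    inducedGen n u A i * inducedGen n u A j * inducedGen n u A i =
      inducedGen n u A j * inducedGen n u A i * inducedGen n u A j := by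
  obtain ⟨i, hi⟩ := i
  obtain ⟨j, hj⟩ := j
  replace hij : i + 1 = j := hij
  ext1 ⟨k, x⟩
  simp only [Equiv.Perm.mul_apply]
  rcases Nat.lt_or_ge (n + 1) k with hk | hk
  · simp only [inducedGen_of_gt _ _ hk]
  rcases (by omega : j + 1 < k ∨ k = j + 1 ∨ k = j ∨ k = i ∨ k < i) with
    hk' | hk' | hk' | hk' | hk' <;>
  simp (disch := omega) only [inducedGen_of_succ_lt, inducedGen_of_eq_succ, inducedGen_of_eq,
    inducedGen_of_lt, ← mul_assoc]
  · subst hij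
    rw [h.braidSeq.braid i (by omega)]
  · subst hij
    rw [Nat.add_sub_cancel]
  · subst hij
    rw [Nat.add_sub_cancel, h.conj i (by omega)]
  · subst hij
    have hq := h.quad i (by omega)
    have hc := h.conj i (by omega)
    have : u i * A (i + 1) * A i = A (i + 1) * A i * u i := by
      apply mul_right_cancel (b := u i)
      rw [mul_assoc _ (A i), mul_assoc _ (A i), hc]
      simpa only [mul_assoc] using hq
    rw [Nat.add_sub_cancel, this]
  · subst hij
    have hb := h.braidSeq.braid (i - 1) (by omega)
    rw [Nat.sub_add_cancel (by omega)] at hb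
    rw [Nat.add_sub_cancel, hb]

lemma IsLoopFamily.inducedGen_comm (h : IsLoopFamily n u A) {i j : Fin (n + 1)}
    (hij : (i : ℕ) + 1 < j) :
    inducedGen n u A i * inducedGen n u A j = inducedGen n u A j * inducedGen n u A i := by
  obtain ⟨i, hi⟩ := i
  obtain ⟨j, hj⟩ := j
  replace hij : i + 1 < j := hij
  ext1 ⟨k, x⟩
  simp only [Equiv.Perm.mul_apply]
  rcases Nat.lt_or_ge (n + 1) k with hk | hk
  · simp only [inducedGen_of_gt _ _ hk]
  rcases (by omega : j + 1 < k ∨ k = j + 1 ∨ k = j ∨ (i + 1 < k ∧ k < j) ∨ k = i + 1 ∨ k = i ∨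
    k < i) with hk' | hk' | hk' | hk' | hk' | hk' | hk' <;>
  simp (disch := omega) only [inducedGen_of_succ_lt, inducedGen_of_eq_succ, inducedGen_of_eq,
    inducedGen_of_lt, ← mul_assoc]
  · rw [h.braidSeq.comm i j hij (by omega)]
  · rw [h.comm i j (by omega) (by omega) (by omega)]
  · rw [h.braidSeq.comm i (j - 1) (by omega) (by omega)]
  · rw [h.comm (j - 1) i (by omega) (by omega) (by omega)]
  · rw [h.braidSeq.comm (i - 1) (j - 1) (by omega) (by omega)]

/-- A sequence of period `n + 1` shifted by conjugation by `ρ` gives rise to a representation of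
the braid group of type `B`. -/
lemma isLoopFamily_of_shift {ρ : K} (hn : 0 < n) (hu : IsBraidSeq_s3 n u)
    (hρ : ∀ i, SemiconjBy ρ (u (i + 1)) (u i)) (hper : u (n + 1) = u 0) :
    IsLoopFamily n u (fun i => loopConj n u (ρ * (descProd u n)⁻¹) (n - i)) := by
  refine isLoopFamily_loopConj hu (fun i hi => ?_) (fun m hm => ?_)
  · exact ((hρ i).mul_left (hu.semiconj_descProd i hi).inv_symm_left).eq.symm
  · subst hm
    set P := descProd u (m + 1)
    set p := descProd u m
    set Q := descProd (fun i => u (i + 1)) m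
    have hp : P = u m * p := descProd_succ u m
    have hQ : P = Q * u 0 := descProd_succ_right u m
    have hρQ : SemiconjBy ρ Q p := descProd_semiconj fun i _ => hρ i
    have hρρ : SemiconjBy (ρ * ρ) (u 0) (u m) := hper ▸ (hρ m).mul_left (hρ (m + 1))
    have hPP : SemiconjBy (P * P)⁻¹ (u m) (u 0) := hu.semiconj_descProd_sq.inv_symm_left
    have hprod : ρ * P⁻¹ * u m * (ρ * P⁻¹) * u m = ρ * ρ * (u 0 * (P * P)⁻¹ * u m) := by
      calc ρ * P⁻¹ * u m * (ρ * P⁻¹) * u m = ρ * (p⁻¹ * ρ) * p⁻¹ := by rw [hp]; group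
        _ = ρ * (ρ * Q⁻¹) * p⁻¹ := by rw [hρQ.inv_right.eq]
        _ = ρ * ρ * ((u 0 * P⁻¹) * (P⁻¹ * u m)) := by
          rw [show u 0 * P⁻¹ = Q⁻¹ by rw [hQ]; group, show P⁻¹ * u m = p⁻¹ by rw [hp]; group]
          group
        _ = ρ * ρ * (u 0 * (P * P)⁻¹ * u m) := by group
    have hcomm : SemiconjBy (ρ * P⁻¹ * u m * (ρ * P⁻¹) * u m) (u m) (u m) := by
      rw [hprod]
      exact hρρ.mul_left (((Commute.refl (u 0)).semiconjBy.mul_left hPP).mul_left (Commute.refl _))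
    apply mul_right_cancel (b := u m)
    rw [hcomm.eq]
    group

end LoopFamily

section Presentations

variable {G : Type*} [Group G]

lemma lift_braidRelWord {I : Type*} (f : I → G) (i j : I) :
    FreeGroup.lift f (braidRelWord i j) = 1 ↔ f i * f j * f i = f j * f i * f j := by
  simp only [braidRelWord, map_mul, map_inv, FreeGroup.lift_apply_of, mul_inv_eq_one]

lemma lift_commRelWord {I : Type*} (f : I → G) (i j : I) :
    FreeGroup.lift f (commRelWord i j) = 1 ↔ f i * f j = f j * f i := by
  simp only [commRelWord, map_mul, map_inv, FreeGroup.lift_apply_of, mul_inv_eq_one]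

lemma lift_presentedGroup_of {I : Type*} {rels : Set (FreeGroup I)} {r : FreeGroup I}
    (hr : r ∈ rels) : FreeGroup.lift (PresentedGroup.of (rels := rels)) r = 1 := by
  have h : FreeGroup.lift (PresentedGroup.of (rels := rels)) = PresentedGroup.mk rels := by
    ext; simp [PresentedGroup.of]
  rw [h]
  exact PresentedGroup.one_of_mem hr

lemma lift_braidRels {n : ℕ} {f : Fin n → G}
    (hb : ∀ i j : Fin n, (i : ℕ) + 1 = j → f i * f j * f i = f j * f i * f j)
    (hc : ∀ i j : Fin n, (i : ℕ) + 1 < j → f i * f j = f j * f i) :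
    ∀ r ∈ braidRels n, FreeGroup.lift f r = 1 := by
  rintro r (⟨i, j, hij, rfl⟩ | ⟨i, j, hij | hij, rfl⟩)
  · exact (lift_braidRelWord f i j).2 (hb i j hij)
  · exact (lift_commRelWord f i j).2 (hc i j hij)
  · exact (lift_commRelWord f i j).2 (hc j i hij).symm

lemma lift_affineBraidRels {n : ℕ} {f : ZMod n → G}
    (hb : 2 < n → ∀ i, f i * f (i + 1) * f i = f (i + 1) * f i * f (i + 1))
    (hc : 2 < n → ∀ i j, i - j ≠ 1 → i - j ≠ -1 → f i * f j = f j * f i) :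
    ∀ r ∈ affineBraidRels n, FreeGroup.lift f r = 1 := by
  intro r hr
  unfold affineBraidRels at hr
  split_ifs at hr with hn
  · exact hr.elim
  · rcases hr with ⟨i, rfl⟩ | ⟨i, j, h1, h2, rfl⟩
    · exact (lift_braidRelWord f i _).2 (hb (by omega) i)
    · exact (lift_commRelWord f i j).2 (hc (by omega) i j h1 h2)

/-- The standard generators of the braid group as a sequence, extended by `1`. -/
def braidGenSeq (n : ℕ) (i : ℕ) : BraidGroup n := if h : i < n then braidGen n ⟨i, h⟩ else 1

lemma braidGenSeq_of_lt {n i : ℕ} (h : i < n) : braidGenSeq n i = braidGen n ⟨i, h⟩ := dif_pos h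

lemma isBraidSeq_braidGenSeq (n : ℕ) : IsBraidSeq_s3 n (braidGenSeq n) := by
  refine ⟨fun i hi => ?_, fun i j hij hj => ?_⟩
  · rw [braidGenSeq_of_lt hi, braidGenSeq_of_lt (by omega : i < n)]
    exact (lift_braidRelWord _ _ _).1 (lift_presentedGroup_of (Or.inl ⟨_, _, rfl, rfl⟩))
  · rw [braidGenSeq_of_lt hj, braidGenSeq_of_lt (by omega : i < n)]
    exact (lift_commRelWord _ _ _).1 (lift_presentedGroup_of (Or.inr ⟨_, _, Or.inl hij, rfl⟩))

lemma prod_ofFn_rev (w : ℕ → G) (n : ℕ) :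
    (List.ofFn fun j : Fin n => w (j.rev : ℕ)).prod = descProd w n := by
  induction n with
  | zero => simp [descProd]
  | succ n ih => simp [List.ofFn_succ, descProd_succ, ← ih]

lemma braidPi_eq_descProd (n : ℕ) : braidPi n = descProd (braidGenSeq n) n := by
  rw [← prod_ofFn_rev]
  simp only [braidPi, braidGenSeq_of_lt (Fin.is_lt _)]

lemma affineBraidGen_braid {n : ℕ} (hn : 2 < n) (i : ZMod n) :
    affineBraidGen n i * affineBraidGen n (i + 1) * affineBraidGen n i =
      affineBraidGen n (i + 1) * affineBraidGen n i * affineBraidGen n (i + 1) := by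
  refine (lift_braidRelWord _ _ _).1 (lift_presentedGroup_of ?_)
  rw [affineBraidRels, if_neg (by omega)]
  exact Or.inl ⟨i, rfl⟩

lemma affineBraidGen_comm {n : ℕ} (hn : 2 < n) {i j : ZMod n} (h1 : i - j ≠ 1)
    (h2 : i - j ≠ -1) :
    affineBraidGen n i * affineBraidGen n j = affineBraidGen n j * affineBraidGen n i := by
  refine (lift_commRelWord _ _ _).1 (lift_presentedGroup_of ?_)
  rw [affineBraidRels, if_neg (by omega)]
  exact Or.inr ⟨i, j, h1, h2, rfl⟩

/-- The endomorphism `s_i ↦ s_{i + c}` of the affine braid group. -/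
def affineShift (n : ℕ) (c : ZMod n) : AffineBraidGroup n →* AffineBraidGroup n :=
  PresentedGroup.toGroup (f := fun i => affineBraidGen n (i + c)) <|
    lift_affineBraidRels
      (fun hn i => by simpa only [add_right_comm] using affineBraidGen_braid hn (i + c))
      (fun hn i j h1 h2 => affineBraidGen_comm hn (by simpa using h1) (by simpa using h2))

lemma affineShift_gen (n : ℕ) (c i : ZMod n) :
    affineShift n c (affineBraidGen n i) = affineBraidGen n (i + c) :=
  PresentedGroup.toGroup.of _

lemma affineShift_neg_apply (n : ℕ) (c : ZMod n) (x : AffineBraidGroup n) :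
    affineShift n (-c) (affineShift n c x) = x := by
  have h : (affineShift n (-c)).comp (affineShift n c) = MonoidHom.id _ := by
    ext i
    change affineShift n (-c) (affineShift n c (affineBraidGen n i)) = affineBraidGen n i
    rw [affineShift_gen, affineShift_gen, add_neg_cancel_right]
  exact DFunLike.congr_fun h x

/-- The permutation of the affine braid group underlying the automorphism `s_i ↦ s_{i - 1}`. -/
def affineShiftPerm (n : ℕ) : Equiv.Perm (AffineBraidGroup n) where
  toFun := affineShift n (-1)
  invFun := affineShift n 1
  left_inv x := by simpa using affineShift_neg_apply n (-1) x
  right_inv x := affineShift_neg_apply n 1 x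

/-- Left multiplication by the generator `s_i` of the affine braid group. -/
def affineGenPerm (n : ℕ) (i : ℕ) : Equiv.Perm (AffineBraidGroup n) :=
  MulAction.toPermHom _ _ (affineBraidGen n (i : ZMod n))

lemma semiconj_affineShiftPerm (n i : ℕ) :
    SemiconjBy (affineShiftPerm n) (affineGenPerm n (i + 1)) (affineGenPerm n i) := by
  ext1 x
  change affineShift n (-1) (affineBraidGen n ((i + 1 : ℕ) : ZMod n) * x) =
    affineBraidGen n (i : ZMod n) * affineShift n (-1) x
  rw [map_mul, affineShift_gen]
  simp

lemma isBraidSeq_affineGenPerm (n : ℕ) : IsBraidSeq_s3 n (affineGenPerm (n + 1)) := by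
  refine ⟨fun i hi => ?_, fun i j hij hj => ?_⟩
  · simp only [affineGenPerm, ← map_mul, Nat.cast_add, Nat.cast_one]
    rw [affineBraidGen_braid (by omega)]
  · simp only [affineGenPerm, ← map_mul]
    rw [affineBraidGen_comm (by omega)]
    · intro h
      have h' : ((i : ℕ) : ZMod (n + 1)) = ((j + 1 : ℕ) : ZMod (n + 1)) := by
        push_cast; rw [← h]; ring
      rw [ZMod.natCast_eq_natCast_iff', Nat.mod_eq_of_lt (by omega),
        Nat.mod_eq_of_lt (by omega)] at h'
      omega
    · intro h
      have h' : ((i + 1 : ℕ) : ZMod (n + 1)) = (j : ZMod (n + 1)) := by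
        push_cast; linear_combination h
      rw [ZMod.natCast_eq_natCast_iff', Nat.mod_eq_of_lt (by omega),
        Nat.mod_eq_of_lt (by omega)] at h'
      omega

end Presentations

section AffineToBraid

/-- The element `s_N Π` of `B(A_N)`, conjugation by which shifts the image of the affine braid
group. -/
def affineRotation (n : ℕ) : BraidGroup (n + 1) :=
  braidGenSeq (n + 1) n * descProd (braidGenSeq (n + 1)) (n + 1)

/-- The images of the generators of the affine braid group in the braid group. -/
def affineImage (n : ℕ) (i : ZMod (n + 1)) : BraidGroup (n + 1) :=
  if i.val = n then affineRotation n * braidGenSeq (n + 1) 0 * (affineRotation n)⁻¹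
  else braidGenSeq (n + 1) i.val

lemma semiconj_affineRotation {n i : ℕ} (hi : i + 1 < n) :
    SemiconjBy (affineRotation n) (braidGenSeq (n + 1) (i + 1)) (braidGenSeq (n + 1) i) := by
  have h := isBraidSeq_braidGenSeq (n + 1)
  have hc : SemiconjBy (braidGenSeq (n + 1) n) (braidGenSeq (n + 1) i) (braidGenSeq (n + 1) i) :=
    (h.comm i n hi (by omega)).symm
  exact hc.mul_left (h.semiconj_descProd i (by omega))

lemma semiconj_affineRotation_sq (n : ℕ) :
    SemiconjBy (affineRotation (n + 1) * affineRotation (n + 1)) (braidGenSeq (n + 2) 0)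
      (braidGenSeq (n + 2) n) := by
  have h := isBraidSeq_braidGenSeq (n + 2)
  set s := braidGenSeq (n + 2)
  set P := descProd s (n + 2)
  have hsq : affineRotation (n + 1) * affineRotation (n + 1) =
      s (n + 1) * s n * (P * P) := by
    have hs : SemiconjBy P (s (n + 1)) (s n) := h.semiconj_descProd n (by omega)
    calc s (n + 1) * P * (s (n + 1) * P) = s (n + 1) * (P * s (n + 1)) * P := by group
      _ = s (n + 1) * s n * (P * P) := by rw [hs.eq]; group
  have hb : SemiconjBy (s (n + 1) * s n) (s (n + 1)) (s n) := by
    rw [SemiconjBy, ← h.braid n (by omega), mul_assoc]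
  rw [hsq]
  exact hb.mul_left h.semiconj_descProd_sq

lemma semiconj_affineImage {n : ℕ} (hn : 0 < n) (i : ZMod (n + 1)) :
    SemiconjBy (affineRotation n) (affineImage n (i + 1)) (affineImage n i) := by
  have hlt := i.val_lt
  rcases (by omega : i.val = n ∨ i.val < n) with hi | hi
  · have h0 : i + 1 = 0 := by
      rw [← ZMod.natCast_zmod_val i, hi]
      exact_mod_cast ZMod.natCast_self (n + 1)
    rw [h0, affineImage, affineImage, if_pos hi, ZMod.val_zero, if_neg (by omega)]
    simp [SemiconjBy]
  · have h1 : (i + 1).val = i.val + 1 := by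
      have hone : (1 : ZMod (n + 1)).val = 1 := ZMod.val_one'' (by omega)
      rw [ZMod.val_add_of_lt (by omega), hone]
    rw [affineImage, affineImage, if_neg hi.ne, h1]
    split_ifs with hin
    · obtain ⟨m, rfl⟩ : ∃ m, n = m + 1 := ⟨i.val, hin.symm⟩
      have hm : i.val = m := by omega
      have h := (semiconj_affineRotation_sq m).eq
      rw [hm, SemiconjBy, ← mul_assoc, ← mul_assoc, h]
      group
    · exact semiconj_affineRotation (by omega)

lemma affineImage_eq_conj {n : ℕ} (hn : 0 < n) (k : ℕ) (i : ZMod (n + 1)) :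
    affineImage n i = MulAut.conj (affineRotation n ^ k) (affineImage n (i + k)) := by
  have h : SemiconjBy (affineRotation n ^ k) (affineImage n (i + k)) (affineImage n i) := by
    induction k with
    | zero => simp
    | succ k ih =>
      have := ih.mul_left (semiconj_affineImage hn (i + k))
      rwa [← pow_succ, add_assoc, ← Nat.cast_succ] at this
  rw [MulAut.conj_apply, h.eq, mul_inv_cancel_right]

/-- The homomorphism from the affine braid group to the braid group. -/
def affineToBraid (n : ℕ) (hn : 0 < n) : AffineBraidGroup (n + 1) →* BraidGroup (n + 1) :=
  PresentedGroup.toGroup (f := affineImage n) <| lift_affineBraidRels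
    (fun h i => by
      have := ZMod.natCast_zmod_val (-i)
      rw [affineImage_eq_conj hn (-i).val i, affineImage_eq_conj hn (-i).val (i + 1), this,
        add_right_comm, add_neg_cancel, zero_add]
      have h1 : (1 : ZMod (n + 1)).val = 1 := ZMod.val_one'' (by omega)
      have hb := (isBraidSeq_braidGenSeq (n + 1)).braid 0 (by omega)
      simp only [← map_mul]
      congr 1
      rw [affineImage, affineImage, ZMod.val_zero, h1, if_neg (by omega), if_neg (by omega)]
      exact hb)
    (fun h i j h1 h2 => by
      have := ZMod.natCast_zmod_val (-i)
      rw [affineImage_eq_conj hn (-i).val i, affineImage_eq_conj hn (-i).val j, this,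
        add_neg_cancel, ← sub_eq_add_neg]
      simp only [← map_mul]
      congr 1
      have hd := (j - i).val_lt
      have hd1 : (j - i).val ≠ 1 := fun hv => h2 <| by
        rw [← neg_sub, ← ZMod.natCast_zmod_val (j - i), hv, Nat.cast_one]
      have hdn : (j - i).val ≠ n := fun hv => h1 <| by
        rw [← neg_sub, ← ZMod.natCast_zmod_val (j - i), hv, neg_eq_iff_add_eq_zero]
        exact_mod_cast ZMod.natCast_self (n + 1)
      rw [affineImage, affineImage, if_neg hdn, ZMod.val_zero, if_neg (by omega)]
      rcases Nat.eq_zero_or_pos (j - i).val with h0 | h0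
      · rw [h0]
      · exact (isBraidSeq_braidGenSeq (n + 1)).comm 0 _ (by omega) (by omega))

lemma affineToBraid_gen (n : ℕ) (hn : 0 < n) (i : ZMod (n + 1)) :
    affineToBraid n hn (affineBraidGen (n + 1) i) = affineImage n i :=
  PresentedGroup.toGroup.of _

end AffineToBraid

section Injectivity

variable {K : Type*} [Group K]

/-- The permutation `π` preserves the copy of `K` with index `N` and acts on it by left
multiplication by `k`. -/
def ActsBy (N : ℕ) (π : Equiv.Perm (ℕ × K)) (k : K) : Prop := ∀ x, π (N, x) = (N, k * x)

variable {N : ℕ} {π π' : Equiv.Perm (ℕ × K)} {k k' : K}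

lemma ActsBy.one : ActsBy N (1 : Equiv.Perm (ℕ × K)) 1 := fun x => by simp

lemma ActsBy.mul (h : ActsBy N π k) (h' : ActsBy N π' k') : ActsBy N (π * π') (k * k') :=
  fun x => by rw [Equiv.Perm.mul_apply, h', h, mul_assoc]

lemma ActsBy.inv (h : ActsBy N π k) : ActsBy N π⁻¹ k⁻¹ :=
  fun x => by rw [Equiv.Perm.inv_eq_iff_eq, h, mul_inv_cancel_left]

/-- The induced action of the braid group on `n + 2` copies of `K`. -/
def inducedHom {n : ℕ} {u A : ℕ → K} (h : IsLoopFamily n u A) :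
    BraidGroup (n + 1) →* Equiv.Perm (ℕ × K) :=
  PresentedGroup.toGroup (f := inducedGen n u A) <|
    lift_braidRels (fun _ _ => h.inducedGen_braid) (fun _ _ => h.inducedGen_comm)

lemma inducedHom_braidGenSeq {n : ℕ} {u A : ℕ → K} (h : IsLoopFamily n u A) {i : ℕ}
    (hi : i < n + 1) : inducedHom h (braidGenSeq (n + 1) i) = inducedGen n u A ⟨i, hi⟩ := by
  rw [braidGenSeq_of_lt hi]
  exact PresentedGroup.toGroup.of _

lemma actsBy_braidGenSeq {n : ℕ} {u A : ℕ → K} (h : IsLoopFamily n u A) {i : ℕ} (hi : i < n) :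
    ActsBy (n + 1) (inducedHom h (braidGenSeq (n + 1) i)) (u i) := fun x => by
  rw [inducedHom_braidGenSeq h (by omega), inducedGen_of_succ_lt _ _ le_rfl (by omega)]

lemma actsBy_descProd {n : ℕ} {u A : ℕ → K} (h : IsLoopFamily n u A) {m : ℕ} (hm : m ≤ n) :
    ActsBy (n + 1) (inducedHom h (descProd (braidGenSeq (n + 1)) m)) (descProd u m) := by
  induction m with
  | zero => simpa [descProd_zero] using ActsBy.one
  | succ m ih =>
    rw [descProd_succ, descProd_succ, map_mul]
    exact (actsBy_braidGenSeq h (by omega)).mul (ih (by omega))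

lemma actsBy_affineRotation {n : ℕ} {u A : ℕ → K} (h : IsLoopFamily n u A) :
    ActsBy (n + 1) (inducedHom h (affineRotation n)) (A n * descProd u n) := by
  rw [affineRotation, descProd_succ, ← mul_assoc, map_mul]
  refine ActsBy.mul (fun x => ?_) (actsBy_descProd h le_rfl)
  rw [map_mul, inducedHom_braidGenSeq h (by omega), Equiv.Perm.mul_apply,
    inducedGen_of_eq_succ _ _ rfl, inducedGen_of_eq _ _ rfl]

lemma affineToBraid_injective {n : ℕ} (hn : 0 < n) :
    Function.Injective (affineToBraid n hn) := by
  have hper : affineGenPerm (n + 1) (n + 1) = affineGenPerm (n + 1) 0 := by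
    simp only [affineGenPerm, ZMod.natCast_self, Nat.cast_zero]
  have h := isLoopFamily_of_shift hn (isBraidSeq_affineGenPerm n)
    (semiconj_affineShiftPerm (n + 1)) hper
  have hrot : ActsBy (n + 1) (inducedHom h (affineRotation n)) (affineShiftPerm (n + 1)) := by
    simpa [loopConj] using actsBy_affineRotation h
  let L := MulAction.toPermHom (AffineBraidGroup (n + 1)) (AffineBraidGroup (n + 1))
  have hgen : ∀ i : ZMod (n + 1),
      ActsBy (n + 1) (inducedHom h (affineImage n i)) (L (affineBraidGen (n + 1) i)) := by
    intro i
    have hlt := i.val_lt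
    have hL : L (affineBraidGen (n + 1) i) = affineGenPerm (n + 1) i.val := by
      rw [affineGenPerm, ZMod.natCast_zmod_val]
    rw [hL, affineImage]
    split_ifs with hi
    · have hconj : affineGenPerm (n + 1) i.val = affineShiftPerm (n + 1) *
          affineGenPerm (n + 1) 0 * (affineShiftPerm (n + 1))⁻¹ := by
        rw [hi, ← hper, (semiconj_affineShiftPerm (n + 1) n).eq, mul_inv_cancel_right]
      rw [hconj, map_mul, map_mul, map_inv]
      exact (hrot.mul (actsBy_braidGenSeq h hn)).mul hrot.inv
    · exact actsBy_braidGenSeq h (by omega)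
  have hall : ∀ x, ActsBy (n + 1) (inducedHom h (affineToBraid n hn x)) (L x) := by
    intro x
    have hx : x ∈ Subgroup.closure
        (Set.range (PresentedGroup.of (rels := affineBraidRels (n + 1)))) := by
      rw [PresentedGroup.closure_range_of]; trivial
    induction hx using Subgroup.closure_induction with
    | mem x hx =>
      obtain ⟨i, rfl⟩ := hx
      have hi := hgen i
      rw [← affineToBraid_gen n hn] at hi
      exact hi
    | one => simpa only [map_one] using ActsBy.one
    | mul x y _ _ hx hy => simpa only [map_mul] using hx.mul hy
    | inv x _ hx => simpa only [map_inv] using hx.inv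
  rw [injective_iff_map_eq_one]
  intro x hx
  have h1 := hall x 1
  rw [hx, map_one, Equiv.Perm.one_apply, mul_one, Prod.mk.injEq] at h1
  simpa [L] using (Equiv.congr_fun h1.2 1).symm

end Injectivity

/-- For every `N ≥ 2` there is a well-defined injective group homomorphism
`φ_N : B(Ã_{N−1}) → B(A_N)` such that `φ_N(s_i) = s_{i+1}` for `0 ≤ i ≤ N−2` and
`φ_N(s_{N−1}) = s_N Π s_1 Π⁻¹ s_N⁻¹`, where `Π = s_N s_{N−1} ⋯ s_1 ∈ B(A_N)`.
(Here `braidGen N ⟨i, _⟩` is the generator `s_{i+1}` of `B(A_N)`.) -/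
theorem exists_injective_affineBraid_to_braid (N : ℕ) (hN : 2 ≤ N) :
    ∃ φ : AffineBraidGroup N →* BraidGroup N,
      Function.Injective φ ∧
      (∀ (i : ℕ) (hi : i ≤ N - 2),
        φ (affineBraidGen N (i : ZMod N)) = braidGen N ⟨i, by omega⟩) ∧
      φ (affineBraidGen N ((N - 1 : ℕ) : ZMod N)) =
        braidGen N ⟨N - 1, by omega⟩ * braidPi N * braidGen N ⟨0, by omega⟩ *
          (braidPi N)⁻¹ * (braidGen N ⟨N - 1, by omega⟩)⁻¹ := by
  obtain ⟨n, rfl⟩ : ∃ n, N = n + 1 := ⟨N - 1, by omega⟩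
  have hn : 0 < n := by omega
  refine ⟨affineToBraid n hn, affineToBraid_injective hn, fun i hi => ?_, ?_⟩
  · have hval : (i : ZMod (n + 1)).val = i := ZMod.val_cast_of_lt (by omega)
    rw [affineToBraid_gen, affineImage, hval, if_neg (by omega), braidGenSeq_of_lt]
  · have hval : ((n + 1 - 1 : ℕ) : ZMod (n + 1)).val = n := ZMod.val_cast_of_lt (by omega)
    rw [affineToBraid_gen, affineImage, if_pos hval, affineRotation, ← braidPi_eq_descProd,
      braidGenSeq_of_lt (by omega : 0 < n + 1), braidGenSeq_of_lt (by omega : n < n + 1)]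
    simp only [mul_inv_rev, mul_assoc, Nat.add_sub_cancel]
end
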